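/- arXiv:1305.6436 — 6 statements merged into one kernel-verified Lean document; each statement's English description precedes it below -/
import Mathlib

section
/- Let μ0, μ1 be Borel probability measures on ℝ² with finite second moment and suppose μ0 is absolutely continuous with respect to the Lebesgue measure L2. Then Opt3(μ0, μ1) contains exactly one element, and this element is induced by a map: there exists a Borel map T : ℝ² → ℝ² such that the unique γ ∈ Opt3(μ0,μ1) equals the pushforward of μ0 under z ↦ (z, T(z)). -/
open MeasureTheory ENNReal
open scoped Classical

noncomputable section

/-- Couplings of two measures on ℝ²: probability measures on the product with the given marginals. -/
def Couplings (μ ν : Measure (ℝ × ℝ)) : Set (Measure ((ℝ × ℝ) × (ℝ × ℝ))) :=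
  {γ | IsProbabilityMeasure γ ∧ γ.map Prod.fst = μ ∧ γ.map Prod.snd = ν}

/-- Transport cost for the squared sup-norm distance on ℝ². -/
def costSup (γ : Measure ((ℝ × ℝ) × (ℝ × ℝ))) : ℝ≥0∞ :=
  ∫⁻ p, edist p.1 p.2 ^ 2 ∂γ

/-- Transport cost for the squared horizontal displacement. -/
def costX (γ : Measure ((ℝ × ℝ) × (ℝ × ℝ))) : ℝ≥0∞ :=
  ∫⁻ p, edist p.1.1 p.2.1 ^ 2 ∂γ

/-- Transport cost for the squared vertical displacement. -/
def costY (γ : Measure ((ℝ × ℝ) × (ℝ × ℝ))) : ℝ≥0∞ :=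
  ∫⁻ p, edist p.1.2 p.2.2 ^ 2 ∂γ

/-- Couplings minimizing the squared sup-norm cost. -/
def Opt1 (μ ν : Measure (ℝ × ℝ)) : Set (Measure ((ℝ × ℝ) × (ℝ × ℝ))) :=
  {γ ∈ Couplings μ ν | ∀ γ' ∈ Couplings μ ν, costSup γ ≤ costSup γ'}

/-- Elements of Opt1 minimizing the squared horizontal cost. -/
def Opt2 (μ ν : Measure (ℝ × ℝ)) : Set (Measure ((ℝ × ℝ) × (ℝ × ℝ))) :=
  {γ ∈ Opt1 μ ν | ∀ γ' ∈ Opt1 μ ν, costX γ ≤ costX γ'}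

/-- Elements of Opt2 minimizing the squared vertical cost. -/
def Opt3 (μ ν : Measure (ℝ × ℝ)) : Set (Measure ((ℝ × ℝ) × (ℝ × ℝ))) :=
  {γ ∈ Opt2 μ ν | ∀ γ' ∈ Opt2 μ ν, costY γ ≤ costY γ'}

/-! ### Existence -/

lemma lsc_lintegral {X : Type*} [TopologicalSpace X] [MeasurableSpace X] [OpensMeasurableSpace X]
    (g : X → NNReal) (hg : Continuous g) :
    LowerSemicontinuous
      (fun γ : ProbabilityMeasure X => ∫⁻ x, (g x : ℝ≥0∞) ∂(γ : Measure X)) := by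
  have key : (fun γ : ProbabilityMeasure X => ∫⁻ x, (g x : ℝ≥0∞) ∂(γ : Measure X)) =
      fun γ : ProbabilityMeasure X =>
        ⨆ n : ℕ, ∫⁻ x, ((min (g x) n : NNReal) : ℝ≥0∞) ∂(γ : Measure X) := by
    funext γ
    rw [← lintegral_iSup]
    · congr 1
      funext x
      apply le_antisymm
      · obtain ⟨n, hn⟩ := exists_nat_ge (g x)
        refine le_trans ?_ (le_iSup _ n)
        simp [min_eq_left hn]
      · exact iSup_le fun n => by exact_mod_cast min_le_left _ _
    · intro n
      exact ((hg.min continuous_const).measurable).coe_nnreal_ennreal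
    · intro n m hnm x
      have : (n : NNReal) ≤ m := by exact_mod_cast hnm
      have h2 : min (g x) (n : NNReal) ≤ min (g x) m := min_le_min_left _ this
      exact ENNReal.coe_le_coe.2 h2
  rw [key]
  apply lowerSemicontinuous_iSup
  intro n
  apply Continuous.lowerSemicontinuous
  rw [continuous_iff_continuousAt]
  intro γ
  let f : BoundedContinuousFunction X NNReal :=
    BoundedContinuousFunction.mkOfBound ⟨fun x => min (g x) n, hg.min continuous_const⟩ n (by
      intro x y
      have h1 : min (g x) (n : NNReal) ≤ n := min_le_right _ _
      have h2 : min (g y) (n : NNReal) ≤ n := min_le_right _ _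
      have h1' : ((min (g x) (n : NNReal) : NNReal) : ℝ) ≤ n := by exact_mod_cast h1
      have h2' : ((min (g y) (n : NNReal) : NNReal) : ℝ) ≤ n := by exact_mod_cast h2
      have h3 := (min (g x) (n : NNReal)).coe_nonneg
      have h4 := (min (g y) (n : NNReal)).coe_nonneg
      rw [NNReal.dist_eq]
      simp only [ContinuousMap.coe_mk]
      rw [abs_le]
      constructor <;> linarith)
  exact (ProbabilityMeasure.tendsto_iff_forall_lintegral_tendsto.1
    (Filter.tendsto_id (x := nhds γ))) f

def PC (μ0 μ1 : Measure (ℝ × ℝ)) : Set (ProbabilityMeasure ((ℝ × ℝ) × (ℝ × ℝ))) :=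
  {γ | (γ : Measure ((ℝ × ℝ) × (ℝ × ℝ))) ∈ Couplings μ0 μ1}

lemma PC_compact (μ0 μ1 : Measure (ℝ × ℝ)) [IsProbabilityMeasure μ0] [IsProbabilityMeasure μ1] :
    IsCompact (PC μ0 μ1) := by
  have hclosed : IsClosed (PC μ0 μ1) := by
    have : PC μ0 μ1 =
        (fun γ : ProbabilityMeasure ((ℝ × ℝ) × (ℝ × ℝ)) =>
          γ.map (f := Prod.fst) measurable_fst.aemeasurable) ⁻¹'
            {(⟨μ0, inferInstance⟩ : ProbabilityMeasure (ℝ × ℝ))} ∩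
        (fun γ : ProbabilityMeasure ((ℝ × ℝ) × (ℝ × ℝ)) =>
          γ.map (f := Prod.snd) measurable_snd.aemeasurable) ⁻¹'
            {(⟨μ1, inferInstance⟩ : ProbabilityMeasure (ℝ × ℝ))} := by
      ext γ
      constructor
      · rintro ⟨_, h1, h2⟩
        exact ⟨Subtype.ext h1, Subtype.ext h2⟩
      · rintro ⟨h1, h2⟩
        exact ⟨inferInstance, congrArg Subtype.val h1, congrArg Subtype.val h2⟩
    rw [this]
    exact (isClosed_singleton.preimage (ProbabilityMeasure.continuous_map continuous_fst)).inter
      (isClosed_singleton.preimage (ProbabilityMeasure.continuous_map continuous_snd))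
  have ht : IsTightMeasureSet
      {((γ : ProbabilityMeasure ((ℝ × ℝ) × (ℝ × ℝ))) : Measure ((ℝ × ℝ) × (ℝ × ℝ))) |
        γ ∈ PC μ0 μ1} := by
    apply IsTightMeasureSet.prodMk
    · refine IsTightMeasureSet.subset (isTightMeasureSet_singleton (μ := μ0)) ?_
      rintro _ ⟨_, ⟨γ, hγ, rfl⟩, rfl⟩
      exact hγ.2.1
    · refine IsTightMeasureSet.subset (isTightMeasureSet_singleton (μ := μ1)) ?_
      rintro _ ⟨_, ⟨γ, hγ, rfl⟩, rfl⟩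
      exact hγ.2.2
  have := isCompact_closure_of_isTightMeasureSet ht
  rwa [hclosed.closure_eq] at this

lemma exists_min_step {Y : Type*} [TopologicalSpace Y] {C : Set Y} (hC : IsCompact C)
    [T2Space Y] (hne : C.Nonempty) (f : Y → ℝ≥0∞) (hf : LowerSemicontinuous f) :
    IsCompact {y ∈ C | ∀ y' ∈ C, f y ≤ f y'} ∧ {y ∈ C | ∀ y' ∈ C, f y ≤ f y'}.Nonempty := by
  obtain ⟨a, haC, ha⟩ := LowerSemicontinuousOn.exists_isMinOn hne hC (hf.lowerSemicontinuousOn C)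
  have ha' : ∀ y' ∈ C, f a ≤ f y' := fun y' hy' => isMinOn_iff.1 ha y' hy'
  refine ⟨?_, a, haC, ha'⟩
  have : {y ∈ C | ∀ y' ∈ C, f y ≤ f y'} = C ∩ f ⁻¹' Set.Iic (f a) := by
    ext y
    constructor
    · rintro ⟨h1, h2⟩
      exact ⟨h1, h2 a haC⟩
    · rintro ⟨h1, h2⟩
      exact ⟨h1, fun y' hy' => le_trans h2 (ha' y' hy')⟩
  rw [this]
  exact hC.inter_right (lowerSemicontinuous_iff_isClosed_preimage.1 hf _)

lemma lsc_edist {f g : (ℝ × ℝ) × (ℝ × ℝ) → ℝ × ℝ} (hf : Continuous f) (hg : Continuous g) :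
    LowerSemicontinuous (fun γ : ProbabilityMeasure ((ℝ × ℝ) × (ℝ × ℝ)) =>
      ∫⁻ x, edist (f x) (g x) ^ 2 ∂(γ : Measure _)) := by
  have := lsc_lintegral (fun x => nndist (f x) (g x) ^ 2) ((hf.nndist hg).pow 2)
  simpa only [edist_nndist, ENNReal.coe_pow] using this

lemma lsc_edist' {f g : (ℝ × ℝ) × (ℝ × ℝ) → ℝ} (hf : Continuous f) (hg : Continuous g) :
    LowerSemicontinuous (fun γ : ProbabilityMeasure ((ℝ × ℝ) × (ℝ × ℝ)) =>
      ∫⁻ x, edist (f x) (g x) ^ 2 ∂(γ : Measure _)) := by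
  have := lsc_lintegral (fun x => nndist (f x) (g x) ^ 2) ((hf.nndist hg).pow 2)
  simpa only [edist_nndist, ENNReal.coe_pow] using this

lemma opt3_nonempty (μ0 μ1 : Measure (ℝ × ℝ)) [IsProbabilityMeasure μ0]
    [IsProbabilityMeasure μ1] : (Opt3 μ0 μ1).Nonempty := by
  have h0 : (PC μ0 μ1).Nonempty := by
    refine ⟨⟨μ0.prod μ1, inferInstance⟩, ?_, ?_, ?_⟩
    · change IsProbabilityMeasure (μ0.prod μ1)
      infer_instance
    · simp
    · simp
  obtain ⟨c1, n1⟩ := exists_min_step (PC_compact μ0 μ1) h0 (fun γ => costSup γ)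
    (lsc_edist continuous_fst continuous_snd)
  obtain ⟨c2, n2⟩ := exists_min_step c1 n1 (fun γ => costX γ)
    (lsc_edist' (continuous_fst.comp continuous_fst) (continuous_fst.comp continuous_snd))
  obtain ⟨c3, n3⟩ := exists_min_step c2 n2 (fun γ => costY γ)
    (lsc_edist' (continuous_snd.comp continuous_fst) (continuous_snd.comp continuous_snd))
  obtain ⟨γ, ⟨⟨⟨hγ, h1⟩, h2⟩, h3⟩⟩ := n3
  have k1 : ∀ γ' ∈ Opt1 μ0 μ1, ∃ h : IsProbabilityMeasure γ',
      (⟨γ', h⟩ : ProbabilityMeasure _) ∈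
        {y ∈ PC μ0 μ1 | ∀ y' ∈ PC μ0 μ1, costSup y ≤ costSup y'} := by
    intro γ' h
    exact ⟨h.1.1, h.1, fun y' hy' => h.2 _ hy'⟩
  have k2 : ∀ γ' ∈ Opt2 μ0 μ1, ∃ h : IsProbabilityMeasure γ',
      (⟨γ', h⟩ : ProbabilityMeasure _) ∈
        {y ∈ {y ∈ PC μ0 μ1 | ∀ y' ∈ PC μ0 μ1, costSup y ≤ costSup y'} |
          ∀ y' ∈ {y ∈ PC μ0 μ1 | ∀ y' ∈ PC μ0 μ1, costSup y ≤ costSup y'},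
            costX y ≤ costX y'} := by
    intro γ' h
    obtain ⟨hp, h'⟩ := k1 γ' h.1
    refine ⟨hp, h', fun y' hy' => h.2 _ ⟨hy'.1, fun γ'' h'' => ?_⟩⟩
    exact hy'.2 ⟨γ'', h''.1⟩ h''
  refine ⟨γ, ⟨⟨hγ, fun γ' h' => h1 ⟨γ', h'.1⟩ h'⟩, fun γ' h' => ?_⟩, fun γ' h' => ?_⟩
  · obtain ⟨hp, h''⟩ := k1 γ' h'
    exact h2 _ h''
  · obtain ⟨hp, h''⟩ := k2 γ' h'
    exact h3 _ h''

/-! ### Swapping -/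

lemma swap_exists {μ ν : Measure (ℝ × ℝ)} {γ : Measure ((ℝ × ℝ) × (ℝ × ℝ))}
    (hγ : γ ∈ Couplings μ ν)
    (η : Measure (((ℝ × ℝ) × (ℝ × ℝ)) × ((ℝ × ℝ) × (ℝ × ℝ))))
    (hη : η.map Prod.fst + η.map Prod.snd ≤ γ) :
    ∃ γ' ∈ Couplings μ ν, ∀ f : (ℝ × ℝ) × (ℝ × ℝ) → ℝ≥0∞, Measurable f →
      ∫⁻ p, f p ∂γ' + ∫⁻ r, (f r.1 + f r.2) ∂η =
      ∫⁻ p, f p ∂γ + ∫⁻ r, (f (r.1.1, r.2.2) + f (r.2.1, r.1.2)) ∂η := by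
  obtain ⟨hp, h1, h2⟩ := hγ
  have hm1 : Measurable (fun r : ((ℝ × ℝ) × (ℝ × ℝ)) × ((ℝ × ℝ) × (ℝ × ℝ)) =>
    (r.1.1, r.2.2)) := by fun_prop
  have hm2 : Measurable (fun r : ((ℝ × ℝ) × (ℝ × ℝ)) × ((ℝ × ℝ) × (ℝ × ℝ)) =>
    (r.2.1, r.1.2)) := by fun_prop
  set A := η.map Prod.fst + η.map Prod.snd with hA
  set B := η.map (fun r => (r.1.1, r.2.2)) + η.map (fun r => (r.2.1, r.1.2)) with hB
  have hAf : IsFiniteMeasure A := isFiniteMeasure_of_le γ hη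
  have e0 : γ - A + B + A = γ + B := by
    rw [add_right_comm, Measure.sub_add_cancel_of_le hη]
  have eA1 : A.map Prod.fst = B.map Prod.fst := by
    rw [hA, hB, Measure.map_add _ _ measurable_fst, Measure.map_add _ _ measurable_fst,
      Measure.map_map measurable_fst measurable_fst, Measure.map_map measurable_fst measurable_snd,
      Measure.map_map measurable_fst hm1, Measure.map_map measurable_fst hm2]
    rfl
  have eA2 : A.map Prod.snd = B.map Prod.snd := by
    rw [hA, hB, Measure.map_add _ _ measurable_snd, Measure.map_add _ _ measurable_snd,
      Measure.map_map measurable_snd measurable_fst, Measure.map_map measurable_snd measurable_snd,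
      Measure.map_map measurable_snd hm1, Measure.map_map measurable_snd hm2, add_comm]
    rfl
  have canc : ∀ g : (ℝ × ℝ) × (ℝ × ℝ) → ℝ × ℝ, Measurable g → A.map g = B.map g →
      (γ - A + B).map g = γ.map g := by
    intro g hg hAB
    have := congrArg (fun m => Measure.map g m) e0
    simp only [Measure.map_add _ _ hg] at this
    rw [← hAB] at this
    ext s hs
    have h3 := congrArg (fun m : Measure (ℝ × ℝ) => m s) this
    simp only [Measure.add_apply] at h3
    have : (A.map g) s ≠ ⊤ := measure_ne_top _ _
    rw [Measure.map_add _ _ hg, ← hAB, Measure.add_apply]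
    exact (ENNReal.add_left_inj this).1 h3
  have hc1 := canc _ measurable_fst eA1
  have hc2 := canc _ measurable_snd eA2
  refine ⟨γ - A + B, ⟨⟨?_⟩, hc1.trans h1, hc2.trans h2⟩, ?_⟩
  · have := congrArg (fun m : Measure (ℝ × ℝ) => m Set.univ) hc1
    simp only [Measure.map_apply measurable_fst MeasurableSet.univ, Set.preimage_univ] at this
    rw [this, measure_univ]
  · intro f hf
    have := congrArg (fun m => ∫⁻ p, f p ∂m) e0
    simp only [lintegral_add_measure (μ := γ - A + B), lintegral_add_measure (μ := γ)] at this
    have iA : ∫⁻ p, f p ∂A = ∫⁻ r, (f r.1 + f r.2) ∂η := by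
      rw [hA, lintegral_add_measure, lintegral_map hf measurable_fst,
        lintegral_map hf measurable_snd, lintegral_add_left (f := fun r : ((ℝ × ℝ) × (ℝ × ℝ)) × ((ℝ × ℝ) × (ℝ × ℝ)) => f r.1) (by fun_prop)]
    have iB : ∫⁻ p, f p ∂B = ∫⁻ r, (f (r.1.1, r.2.2) + f (r.2.1, r.1.2)) ∂η := by
      rw [hB, lintegral_add_measure, lintegral_map hf hm1,
        lintegral_map hf hm2, lintegral_add_left (f := fun r : ((ℝ × ℝ) × (ℝ × ℝ)) × ((ℝ × ℝ) × (ℝ × ℝ)) => f (r.1.1, r.2.2))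
          (by fun_prop)]
    rw [← iA, ← iB]
    exact this

/-- Tie of the swap for the cost f. -/
def Tie (f : (ℝ × ℝ) × (ℝ × ℝ) → ℝ≥0∞)
    (r : ((ℝ × ℝ) × (ℝ × ℝ)) × ((ℝ × ℝ) × (ℝ × ℝ))) : Prop :=
  f (r.1.1, r.2.2) + f (r.2.1, r.1.2) = f r.1 + f r.2

/-- Strict gain of the swap for the cost f. -/
def Gain (f : (ℝ × ℝ) × (ℝ × ℝ) → ℝ≥0∞)
    (r : ((ℝ × ℝ) × (ℝ × ℝ)) × ((ℝ × ℝ) × (ℝ × ℝ))) : Prop :=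
  f (r.1.1, r.2.2) + f (r.2.1, r.1.2) < f r.1 + f r.2

lemma measurableSet_tie {f : (ℝ × ℝ) × (ℝ × ℝ) → ℝ≥0∞} (hf : Measurable f) :
    MeasurableSet {r | Tie f r} := by
  have h1 : Measurable (fun r : ((ℝ × ℝ) × (ℝ × ℝ)) × ((ℝ × ℝ) × (ℝ × ℝ)) =>
    f (r.1.1, r.2.2) + f (r.2.1, r.1.2)) := by fun_prop
  have h2 : Measurable (fun r : ((ℝ × ℝ) × (ℝ × ℝ)) × ((ℝ × ℝ) × (ℝ × ℝ)) =>
    f r.1 + f r.2) := by fun_prop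
  exact measurableSet_eq_fun h1 h2

lemma measurableSet_gain {f : (ℝ × ℝ) × (ℝ × ℝ) → ℝ≥0∞} (hf : Measurable f) :
    MeasurableSet {r | Gain f r} := by
  have h1 : Measurable (fun r : ((ℝ × ℝ) × (ℝ × ℝ)) × ((ℝ × ℝ) × (ℝ × ℝ)) =>
    f (r.1.1, r.2.2) + f (r.2.1, r.1.2)) := by fun_prop
  have h2 : Measurable (fun r : ((ℝ × ℝ) × (ℝ × ℝ)) × ((ℝ × ℝ) × (ℝ × ℝ)) =>
    f r.1 + f r.2) := by fun_prop
  exact measurableSet_lt h1 h2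

/-- Swapping on a set. -/
lemma swap_on {μ ν : Measure (ℝ × ℝ)} {γ : Measure ((ℝ × ℝ) × (ℝ × ℝ))}
    (hγ : γ ∈ Couplings μ ν)
    (η : Measure (((ℝ × ℝ) × (ℝ × ℝ)) × ((ℝ × ℝ) × (ℝ × ℝ))))
    (hη : η.map Prod.fst + η.map Prod.snd ≤ γ)
    (E : Set (((ℝ × ℝ) × (ℝ × ℝ)) × ((ℝ × ℝ) × (ℝ × ℝ)))) (hE : MeasurableSet E) :
    ∃ γ' ∈ Couplings μ ν, ∀ f : (ℝ × ℝ) × (ℝ × ℝ) → ℝ≥0∞, Measurable f → ∫⁻ p, f p ∂γ < ⊤ →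
      ((∀ r ∈ E, Tie f r) → ∫⁻ p, f p ∂γ' = ∫⁻ p, f p ∂γ) ∧
      ((∀ r ∈ E, Gain f r) → η E ≠ 0 → ∫⁻ p, f p ∂γ' < ∫⁻ p, f p ∂γ) := by
  have hle : (η.restrict E).map Prod.fst + (η.restrict E).map Prod.snd ≤ γ := by
    refine le_trans ?_ hη
    gcongr
    · exact measurable_fst
    · exact Measure.restrict_le_self
    · exact measurable_snd
    · exact Measure.restrict_le_self
  obtain ⟨γ', hγ', h⟩ := swap_exists hγ (η.restrict E) hle
  refine ⟨γ', hγ', fun f hf hfin => ?_⟩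
  have h1 := h f hf
  have hfin2 : ∫⁻ r in E, (f r.1 + f r.2) ∂η ≠ ⊤ := by
    have : ∫⁻ r in E, (f r.1 + f r.2) ∂η =
        ∫⁻ p, f p ∂((η.restrict E).map Prod.fst + (η.restrict E).map Prod.snd) := by
      rw [lintegral_add_measure, lintegral_map hf measurable_fst,
        lintegral_map hf measurable_snd, lintegral_add_left (f := fun r : ((ℝ × ℝ) × (ℝ × ℝ)) × ((ℝ × ℝ) × (ℝ × ℝ)) => f r.1) (by fun_prop)]
    rw [this]
    exact ((lintegral_mono' hle le_rfl).trans_lt hfin).ne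
  constructor
  · intro ht
    have : ∫⁻ r in E, (f (r.1.1, r.2.2) + f (r.2.1, r.1.2)) ∂η =
        ∫⁻ r in E, (f r.1 + f r.2) ∂η := setLIntegral_congr_fun hE (fun r hr => ht r hr)
    rw [this] at h1
    exact (ENNReal.add_left_inj hfin2).1 h1
  · intro hg hne
    have hlt : ∫⁻ r in E, (f (r.1.1, r.2.2) + f (r.2.1, r.1.2)) ∂η <
        ∫⁻ r in E, (f r.1 + f r.2) ∂η := by
      apply lintegral_strict_mono
      · rwa [Ne, Measure.restrict_eq_zero]
      · exact Measurable.aemeasurable (by fun_prop)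
      · refine ((setLIntegral_mono (by fun_prop) fun r hr => (hg r hr).le).trans_lt ?_).ne
        exact lt_top_iff_ne_top.2 hfin2
      · exact (ae_restrict_iff' hE).2 (Filter.Eventually.of_forall fun r hr => hg r hr)
    by_contra! hcon
    have : ∫⁻ p, f p ∂γ + ∫⁻ r in E, (f (r.1.1, r.2.2) + f (r.2.1, r.1.2)) ∂η <
        ∫⁻ p, f p ∂γ + ∫⁻ r in E, (f r.1 + f r.2) ∂η :=
      ENNReal.add_lt_add_left hfin.ne hlt
    rw [← h1] at this
    exact absurd (this.trans_le (add_le_add_left hcon _)) (lt_irrefl _)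

def fS (p : (ℝ × ℝ) × (ℝ × ℝ)) : ℝ≥0∞ := edist p.1 p.2 ^ 2
def fX (p : (ℝ × ℝ) × (ℝ × ℝ)) : ℝ≥0∞ := edist p.1.1 p.2.1 ^ 2
def fY (p : (ℝ × ℝ) × (ℝ × ℝ)) : ℝ≥0∞ := edist p.1.2 p.2.2 ^ 2

lemma measurable_fS : Measurable fS := by unfold fS; fun_prop
lemma measurable_fX : Measurable fX := by unfold fX; fun_prop
lemma measurable_fY : Measurable fY := by unfold fY; fun_prop

/-- Strict lexicographic improvement. -/
def Bad (r : ((ℝ × ℝ) × (ℝ × ℝ)) × ((ℝ × ℝ) × (ℝ × ℝ))) : Prop :=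
  Gain fS r ∨ (Tie fS r ∧ Gain fX r) ∨ (Tie fS r ∧ Tie fX r ∧ Gain fY r)

lemma bad_null {μ ν : Measure (ℝ × ℝ)} {γ : Measure ((ℝ × ℝ) × (ℝ × ℝ))}
    (hγ : γ ∈ Opt3 μ ν) (h1 : costSup γ < ⊤) (h2 : costX γ < ⊤) (h3 : costY γ < ⊤)
    (η : Measure (((ℝ × ℝ) × (ℝ × ℝ)) × ((ℝ × ℝ) × (ℝ × ℝ))))
    (hη : η.map Prod.fst + η.map Prod.snd ≤ γ) : η {r | Bad r} = 0 := by
  have e1 : η {r | Gain fS r} = 0 := by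
    by_contra hne
    obtain ⟨γ', hc, h⟩ := swap_on hγ.1.1.1 η hη _ (measurableSet_gain measurable_fS)
    exact absurd (hγ.1.1.2 γ' hc) (not_le.2 ((h fS measurable_fS h1).2 (fun r hr => hr) hne))
  have e2 : η {r | Tie fS r ∧ Gain fX r} = 0 := by
    by_contra hne
    obtain ⟨γ', hc, h⟩ := swap_on hγ.1.1.1 η hη _
      ((measurableSet_tie measurable_fS).inter (measurableSet_gain measurable_fX))
    have t1 : costSup γ' = costSup γ := (h fS measurable_fS h1).1 (fun r hr => hr.1)
    have hO : γ' ∈ Opt1 μ ν := ⟨hc, fun γ'' h'' => t1.le.trans (hγ.1.1.2 γ'' h'')⟩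
    exact absurd (hγ.1.2 γ' hO) (not_le.2 ((h fX measurable_fX h2).2 (fun r hr => hr.2) hne))
  have e3 : η {r | Tie fS r ∧ Tie fX r ∧ Gain fY r} = 0 := by
    by_contra hne
    obtain ⟨γ', hc, h⟩ := swap_on hγ.1.1.1 η hη _
      ((measurableSet_tie measurable_fS).inter
        ((measurableSet_tie measurable_fX).inter (measurableSet_gain measurable_fY)))
    have t1 : costSup γ' = costSup γ := (h fS measurable_fS h1).1 (fun r hr => hr.1)
    have t2 : costX γ' = costX γ := (h fX measurable_fX h2).1 (fun r hr => hr.2.1)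
    have hO : γ' ∈ Opt1 μ ν := ⟨hc, fun γ'' h'' => t1.le.trans (hγ.1.1.2 γ'' h'')⟩
    have hO2 : γ' ∈ Opt2 μ ν := ⟨hO, fun γ'' h'' => t2.le.trans (hγ.1.2 γ'' h'')⟩
    exact absurd (hγ.2 γ' hO2) (not_le.2 ((h fY measurable_fY h3).2 (fun r hr => hr.2.2) hne))
  exact measure_union_null e1 (measure_union_null e2 e3)

lemma cost_finite {μ ν : Measure (ℝ × ℝ)} {γ : Measure ((ℝ × ℝ) × (ℝ × ℝ))}
    (hγ : γ ∈ Couplings μ ν)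
    (hm0 : ∫⁻ z, (‖z‖₊ : ℝ≥0∞) ^ 2 ∂μ < ⊤) (hm1 : ∫⁻ z, (‖z‖₊ : ℝ≥0∞) ^ 2 ∂ν < ⊤) :
    costSup γ < ⊤ ∧ costX γ < ⊤ ∧ costY γ < ⊤ := by
  have hS : costSup γ < ⊤ := by
    obtain ⟨hp, h1, h2⟩ := hγ
    have hb : ∀ p : (ℝ × ℝ) × (ℝ × ℝ),
        edist p.1 p.2 ^ 2 ≤ 2 * ((‖p.1‖₊ : ℝ≥0∞) ^ 2) + 2 * ((‖p.2‖₊ : ℝ≥0∞) ^ 2) := by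
      intro p
      rw [edist_nndist]
      have : nndist p.1 p.2 ^ 2 ≤ 2 * ‖p.1‖₊ ^ 2 + 2 * ‖p.2‖₊ ^ 2 := by
        have h3 : nndist p.1 p.2 ≤ ‖p.1‖₊ + ‖p.2‖₊ := by
          rw [nndist_eq_nnnorm]; exact nnnorm_sub_le _ _
        rw [← NNReal.coe_le_coe] at h3 ⊢
        push_cast at h3 ⊢
        nlinarith [sq_nonneg (‖p.1‖ - ‖p.2‖), norm_nonneg p.1, norm_nonneg p.2,
          dist_nonneg (x := p.1) (y := p.2)]
      exact_mod_cast this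
    have mz : Measurable (fun z : ℝ × ℝ => (‖z‖₊ : ℝ≥0∞) ^ 2) := by fun_prop
    refine (lintegral_mono hb).trans_lt ?_
    rw [lintegral_add_left (by fun_prop), lintegral_const_mul _ (by fun_prop),
      lintegral_const_mul _ (by fun_prop)]
    rw [← h1, lintegral_map mz measurable_fst] at hm0
    rw [← h2, lintegral_map mz measurable_snd] at hm1
    exact ENNReal.add_lt_top.2 ⟨ENNReal.mul_lt_top (by simp) hm0, ENNReal.mul_lt_top (by simp) hm1⟩
  refine ⟨hS, lt_of_le_of_lt (lintegral_mono fun p => ?_) hS,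
    lt_of_le_of_lt (lintegral_mono fun p => ?_) hS⟩
  · gcongr
    rw [Prod.edist_eq]; exact le_max_left _ _
  · gcongr
    rw [Prod.edist_eq]; exact le_max_right _ _

/-! ### Self-couplings along lines -/

lemma exists_good_subset {ρ : Measure (ℝ × ℝ)} [IsProbabilityMeasure ρ]
    (hρ : ρ ≪ (volume : Measure (ℝ × ℝ))) {D : Set (ℝ × ℝ)} (hD : MeasurableSet D)
    (hpos : ρ D ≠ 0) :
    ∃ D' ⊆ D, MeasurableSet D' ∧ (volume : Measure (ℝ × ℝ)) D' ≠ 0 ∧ ∃ n : ℕ,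
      (∀ z ∈ D', z.2 ∈ Set.Icc (-(n : ℝ)) n) ∧
      ∀ A, MeasurableSet A → ((n : ℝ≥0∞) + 1)⁻¹ * volume (A ∩ D') ≤ ρ A := by
  set f := ρ.rnDeriv (volume : Measure (ℝ × ℝ)) with hf
  have hfm : Measurable f := Measure.measurable_rnDeriv _ _
  have hρf : (volume : Measure (ℝ × ℝ)).withDensity f = ρ := Measure.withDensity_rnDeriv_eq _ _ hρ
  let Dn : ℕ → Set (ℝ × ℝ) := fun n =>
    D ∩ ({z | ((n : ℝ≥0∞) + 1)⁻¹ < f z} ∩ {z | z.2 ∈ Set.Icc (-(n : ℝ)) n})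
  have hDn : ∀ n, MeasurableSet (Dn n) := fun n =>
    hD.inter ((measurableSet_lt measurable_const hfm).inter (measurable_snd measurableSet_Icc))
  have hex : ∃ n, (volume : Measure (ℝ × ℝ)) (Dn n) ≠ 0 := by
    by_contra! hcon
    apply hpos
    have h1 : (volume : Measure (ℝ × ℝ)) (⋃ n, Dn n) = 0 := measure_iUnion_null hcon
    have h2 : ρ (⋃ n, Dn n) = 0 := hρ h1
    have h3 : ρ {z | f z = 0} = 0 := by
      have hz0 : MeasurableSet {z | f z = 0} := hfm (measurableSet_singleton 0)
      rw [← hρf, withDensity_apply _ hz0]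
      rw [setLIntegral_congr_fun (g := fun _ => 0) hz0]
      · simp
      · intro z hz
        exact hz
    refine measure_mono_null ?_ (measure_union_null h2 h3)
    intro z hz
    by_cases hfz : f z = 0
    · exact Or.inr hfz
    · left
      obtain ⟨n, hn⟩ := ENNReal.exists_inv_nat_lt hfz
      obtain ⟨m, hm⟩ := exists_nat_ge |z.2|
      refine Set.mem_iUnion.2 ⟨max n m, hz, ?_, ?_⟩
      · refine lt_of_le_of_lt ?_ hn
        rw [ENNReal.inv_le_inv]
        have : n ≤ max n m + 1 := by omega
        exact_mod_cast this
      · have hm' : |z.2| ≤ ((max n m : ℕ) : ℝ) := hm.trans (by exact_mod_cast le_max_right n m)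
        exact ⟨(abs_le.1 hm').1, (abs_le.1 hm').2⟩
  obtain ⟨n, hn⟩ := hex
  refine ⟨Dn n, Set.inter_subset_left, hDn n, hn, n, fun z hz => hz.2.2, fun A hA => ?_⟩
  have hAD := hA.inter (hDn n)
  calc ((n : ℝ≥0∞) + 1)⁻¹ * volume (A ∩ Dn n)
      = ∫⁻ z in A ∩ Dn n, ((n : ℝ≥0∞) + 1)⁻¹ := by rw [setLIntegral_const]
    _ ≤ ∫⁻ z in A ∩ Dn n, f z := setLIntegral_mono hfm fun z hz => hz.2.2.1.le
    _ = ρ (A ∩ Dn n) := by rw [← withDensity_apply _ hAD, hρf]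
    _ ≤ ρ A := measure_mono Set.inter_subset_left

lemma null_of_half_null {B : Set ℝ} (h : (volume : Measure (ℝ × ℝ)) {q | q.1 ∈ B ∧ q.2 ∈ B ∧ q.1 < q.2} = 0) :
    (volume : Measure ℝ) B = 0 := by
  have h2 : (volume : Measure (ℝ × ℝ)) {q | q.1 ∈ B ∧ q.2 ∈ B ∧ q.2 < q.1} = 0 := by
    have hs : Measure.map Prod.swap (volume : Measure (ℝ × ℝ)) = volume := by
      rw [Measure.volume_eq_prod, Measure.prod_swap]
    have := (MeasurePreserving.mk measurable_swap hs).quasiMeasurePreserving.preimage_null h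
    refine measure_mono_null ?_ this
    rintro ⟨a, b⟩ ⟨h1, h2, h3⟩
    exact ⟨h2, h1, h3⟩
  have h3 : (volume : Measure (ℝ × ℝ)) {q | q.1 = q.2} = 0 := by
    rw [Measure.volume_eq_prod,
      Measure.measure_prod_null (measurableSet_eq_fun measurable_fst measurable_snd)]
    refine Filter.Eventually.of_forall fun x => ?_
    have : Prod.mk x ⁻¹' {q : ℝ × ℝ | q.1 = q.2} = {x} := by
      ext y; simp [eq_comm]
    simp [this]
  have h4 : (volume : Measure (ℝ × ℝ)) (B ×ˢ B) = 0 := by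
    refine measure_mono_null ?_ (measure_union_null h (measure_union_null h2 h3))
    rintro ⟨a, b⟩ ⟨ha, hb⟩
    rcases lt_trichotomy a b with hab | hab | hab
    · exact Or.inl ⟨ha, hb, hab⟩
    · exact Or.inr (Or.inr hab)
    · exact Or.inr (Or.inl ⟨ha, hb, hab⟩)
  rw [Measure.volume_eq_prod, Measure.prod_prod, mul_self_eq_zero] at h4
  exact h4

lemma theta0 {ρ : Measure (ℝ × ℝ)} [IsProbabilityMeasure ρ]
    (hρ : ρ ≪ (volume : Measure (ℝ × ℝ))) {D : Set (ℝ × ℝ)} (hD : MeasurableSet D)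
    (hpos : ρ D ≠ 0) :
    ∃ θ : Measure ((ℝ × ℝ) × (ℝ × ℝ)), θ.map Prod.fst + θ.map Prod.snd ≤ ρ ∧ θ ≠ 0 ∧
      ∀ᵐ q ∂θ, q.1 ∈ D ∧ q.2 ∈ D ∧ q.1.1 = q.2.1 ∧ q.1.2 < q.2.2 := by
  obtain ⟨D', hsub, hD', hvol, n, hn, hle⟩ := exists_good_subset hρ hD hpos
  set S : Set (ℝ × (ℝ × ℝ)) :=
    {r | (r.1, r.2.1) ∈ D' ∧ (r.1, r.2.2) ∈ D' ∧ r.2.1 < r.2.2} with hS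
  have hm1 : Measurable (fun r : ℝ × (ℝ × ℝ) => (r.1, r.2.1)) := by fun_prop
  have hm2 : Measurable (fun r : ℝ × (ℝ × ℝ) => (r.1, r.2.2)) := by fun_prop
  have hlt : MeasurableSet {r : ℝ × (ℝ × ℝ) | r.2.1 < r.2.2} :=
    measurableSet_lt (by fun_prop) (by fun_prop)
  have hSm : MeasurableSet S := (hm1 hD').inter ((hm2 hD').inter hlt)
  let J : ℝ × (ℝ × ℝ) → (ℝ × ℝ) × (ℝ × ℝ) := fun r => ((r.1, r.2.1), (r.1, r.2.2))
  have hJ : Measurable J := by fun_prop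
  set c : ℝ≥0∞ := ((n : ℝ≥0∞) + 1)⁻¹ * (4 * (n : ℝ≥0∞) + 1)⁻¹ with hc
  have hc0 : c ≠ 0 := by
    have h1 : ((n : ℝ≥0∞) + 1) ≠ ⊤ := by finiteness
    have h2 : (4 * (n : ℝ≥0∞) + 1) ≠ ⊤ := by finiteness
    exact mul_ne_zero (ENNReal.inv_ne_zero.2 h1) (ENNReal.inv_ne_zero.2 h2)
  -- bound for the marginals
  have hb : ∀ A, MeasurableSet A →
      (volume : Measure (ℝ × (ℝ × ℝ))) ({r | (r.1, r.2.1) ∈ A} ∩ S)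
        ≤ volume (A ∩ D') * (2 * n) ∧
      (volume : Measure (ℝ × (ℝ × ℝ))) ({r | (r.1, r.2.2) ∈ A} ∩ S)
        ≤ volume (A ∩ D') * (2 * n) := by
    intro A hA
    have hAD := hA.inter hD'
    have hmA1 : MeasurableSet {r : ℝ × (ℝ × ℝ) | (r.1, r.2.1) ∈ A} := hm1 hA
    have hmA2 : MeasurableSet {r : ℝ × (ℝ × ℝ) | (r.1, r.2.2) ∈ A} := hm2 hA
    have hI : (volume : Measure ℝ) (Set.Icc (-(n : ℝ)) n) = 2 * n := by
      rw [Real.volume_Icc, show (n : ℝ) - -(n : ℝ) = ((2 * n : ℕ) : ℝ) by push_cast; ring,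
        ENNReal.ofReal_natCast]
      push_cast; rfl
    have hfm : Measurable (fun k => (volume : Measure ℝ) (Prod.mk k ⁻¹' (A ∩ D'))) :=
      measurable_measure_prodMk_left hAD
    have hR : volume (A ∩ D') * (2 * n) =
        ∫⁻ k : ℝ, volume (Prod.mk k ⁻¹' (A ∩ D')) * (2 * (n : ℝ≥0∞)) := by
      rw [lintegral_mul_const _ hfm, Measure.volume_eq_prod, Measure.prod_apply hAD]
    constructor
    · rw [hR, Measure.volume_eq_prod, Measure.prod_apply (hmA1.inter hSm)]
      refine lintegral_mono fun k => ?_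
      rw [← hI, ← Measure.prod_prod, ← Measure.volume_eq_prod]
      refine measure_mono ?_
      rintro ⟨s, t⟩ ⟨h1, h2, h3, h4⟩
      exact ⟨⟨h1, h2⟩, hn (k, t) h3⟩
    · rw [hR, Measure.volume_eq_prod, Measure.prod_apply (hmA2.inter hSm)]
      refine lintegral_mono fun k => ?_
      rw [← hI, mul_comm, ← Measure.prod_prod, ← Measure.volume_eq_prod]
      refine measure_mono ?_
      rintro ⟨s, t⟩ ⟨h1, h2, h3, h4⟩
      exact ⟨hn (k, s) h2, ⟨h1, h3⟩⟩
  refine ⟨c • ((volume : Measure (ℝ × (ℝ × ℝ))).restrict S).map J, ?_, ?_, ?_⟩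
  · refine Measure.le_iff.2 fun A hA => ?_
    obtain ⟨b1, b2⟩ := hb A hA
    rw [Measure.add_apply, Measure.map_apply measurable_fst hA, Measure.map_apply measurable_snd hA,
      Measure.smul_apply, Measure.smul_apply, Measure.map_apply hJ (measurable_fst hA),
      Measure.map_apply hJ (measurable_snd hA),
      Measure.restrict_apply (hJ (measurable_fst hA)),
      Measure.restrict_apply (hJ (measurable_snd hA)), smul_eq_mul, smul_eq_mul]
    refine le_trans (add_le_add (mul_le_mul_right b1 c) (mul_le_mul_right b2 c)) ?_
    refine le_trans ?_ (hle A hA)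
    have : c * (volume (A ∩ D') * (2 * n)) + c * (volume (A ∩ D') * (2 * n)) =
        (((n : ℝ≥0∞) + 1)⁻¹ * volume (A ∩ D')) * ((4 * (n : ℝ≥0∞) + 1)⁻¹ * (4 * (n : ℝ≥0∞))) := by
      rw [hc]; ring
    rw [this]
    refine mul_le_of_le_one_right' ?_
    rw [mul_comm, ← div_eq_mul_inv]
    refine ENNReal.div_le_of_le_mul ?_
    rw [one_mul]
    exact le_self_add
  · intro h0
    apply hvol
    have h1 : ((volume : Measure (ℝ × (ℝ × ℝ))).restrict S).map J = 0 := by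
      ext A hA
      have := congrArg (fun m : Measure ((ℝ × ℝ) × (ℝ × ℝ)) => m A) h0
      simp only [Measure.smul_apply, smul_eq_mul, Measure.coe_zero, Pi.zero_apply,
        mul_eq_zero, hc0, false_or] at this
      simpa using this
    rw [Measure.map_eq_zero_iff hJ.aemeasurable, Measure.restrict_eq_zero,
      Measure.volume_eq_prod, Measure.measure_prod_null hSm] at h1
    rw [Measure.volume_eq_prod, Measure.measure_prod_null hD']
    filter_upwards [h1] with k hk
    exact null_of_half_null (B := Prod.mk k ⁻¹' D') hk
  · refine Measure.ae_smul_measure ?_ c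
    have hq1 : MeasurableSet {q : (ℝ × ℝ) × (ℝ × ℝ) | q.1.1 = q.2.1} :=
      measurableSet_eq_fun (by fun_prop) (by fun_prop)
    have hq2 : MeasurableSet {q : (ℝ × ℝ) × (ℝ × ℝ) | q.1.2 < q.2.2} :=
      measurableSet_lt (by fun_prop) (by fun_prop)
    have hms : MeasurableSet {q : (ℝ × ℝ) × (ℝ × ℝ) |
        q.1 ∈ D ∧ q.2 ∈ D ∧ q.1.1 = q.2.1 ∧ q.1.2 < q.2.2} :=
      (measurable_fst hD).inter ((measurable_snd hD).inter
        (hq1.inter hq2))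
    rw [ae_map_iff hJ.aemeasurable hms]
    refine (ae_restrict_iff' hSm).2 (Filter.Eventually.of_forall fun r hr => ?_)
    exact ⟨hsub hr.1, hsub hr.2.1, rfl, hr.2.2⟩

lemma theta1 {μ0 : Measure (ℝ × ℝ)} [IsProbabilityMeasure μ0]
    (hac : μ0 ≪ (volume : Measure (ℝ × ℝ))) {D : Set (ℝ × ℝ)} (hD : MeasurableSet D)
    (hpos : μ0 D ≠ 0) (e v : ℝ × ℝ) (hdet : e.1 * v.2 - e.2 * v.1 ≠ 0) :
    ∃ θ : Measure ((ℝ × ℝ) × (ℝ × ℝ)), θ.map Prod.fst + θ.map Prod.snd ≤ μ0 ∧ θ ≠ 0 ∧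
      ∀ᵐ q ∂θ, q.1 ∈ D ∧ q.2 ∈ D ∧ ∃ t : ℝ, 0 < t ∧ q.2 = q.1 + t • v := by
  set δ := e.1 * v.2 - e.2 * v.1 with hδ
  let Φ : ℝ × ℝ → ℝ × ℝ := fun r => r.1 • e + r.2 • v
  have hΦ : Measurable Φ := by fun_prop
  let Ψ : (ℝ × ℝ) →ₗ[ℝ] (ℝ × ℝ) :=
    Matrix.toLin (Module.Basis.finTwoProd ℝ) (Module.Basis.finTwoProd ℝ)
      !![v.2 / δ, -v.1 / δ; -e.2 / δ, e.1 / δ]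
  have hΨa : ∀ z : ℝ × ℝ, Ψ z = (v.2 / δ * z.1 + -v.1 / δ * z.2, -e.2 / δ * z.1 + e.1 / δ * z.2) :=
    fun z => Matrix.toLin_finTwoProd_apply _ _ _ _ z
  have hΨdet : LinearMap.det Ψ ≠ 0 := by
    simp only [Ψ, LinearMap.det_toLin, Matrix.det_fin_two_of]
    have : v.2 / δ * (e.1 / δ) - -v.1 / δ * (-e.2 / δ) = δ⁻¹ := by
      field_simp
      rw [hδ]; ring
    rw [this]
    exact inv_ne_zero hdet
  have hΨm : Measurable Ψ := (LinearMap.continuous_of_finiteDimensional Ψ).measurable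
  have hΦΨ : ∀ z, Φ (Ψ z) = z := by
    intro z
    rw [hΨa]
    simp only [Φ]
    ext
    · simp only [Prod.fst_add, Prod.smul_fst, smul_eq_mul]
      field_simp
      rw [hδ]; ring
    · simp only [Prod.snd_add, Prod.smul_snd, smul_eq_mul]
      field_simp
      rw [hδ]; ring
  have hρac : μ0.map Ψ ≪ (volume : Measure (ℝ × ℝ)) := by
    refine (hac.map hΨm).trans ?_
    rw [Measure.map_linearMap_addHaar_eq_smul_addHaar _ hΨdet]
    exact Measure.smul_absolutelyContinuous
  have : IsProbabilityMeasure (μ0.map Ψ) := Measure.isProbabilityMeasure_map hΨm.aemeasurable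
  have hback : (μ0.map Ψ).map Φ = μ0 := by
    rw [Measure.map_map hΦ hΨm, show Φ ∘ Ψ = id from funext hΦΨ, Measure.map_id]
  have hpos' : (μ0.map Ψ) (Φ ⁻¹' D) ≠ 0 := by
    rwa [← Measure.map_apply hΦ hD, hback]
  obtain ⟨θ, h1, h2, h3⟩ := theta0 hρac (hΦ hD) hpos'
  have hm : Measurable (Prod.map Φ Φ) := hΦ.prodMap hΦ
  refine ⟨θ.map (Prod.map Φ Φ), ?_, ?_, ?_⟩
  · rw [Measure.map_map measurable_fst hm, Measure.map_map measurable_snd hm]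
    have := Measure.map_mono h1 hΦ
    rw [hback, Measure.map_add _ _ hΦ, Measure.map_map hΦ measurable_fst,
      Measure.map_map hΦ measurable_snd] at this
    exact this
  · rwa [Ne, Measure.map_eq_zero_iff hm.aemeasurable]
  · have hτ : Measurable (fun q : (ℝ × ℝ) × (ℝ × ℝ) => (Ψ q.2).2 - (Ψ q.1).2) :=
      (measurable_snd.comp (hΨm.comp measurable_snd)).sub
        (measurable_snd.comp (hΨm.comp measurable_fst))
    have hms : MeasurableSet {q : (ℝ × ℝ) × (ℝ × ℝ) |
        q.1 ∈ D ∧ q.2 ∈ D ∧ 0 < (Ψ q.2).2 - (Ψ q.1).2 ∧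
          q.2 = q.1 + ((Ψ q.2).2 - (Ψ q.1).2) • v} :=
      (measurable_fst hD).inter ((measurable_snd hD).inter
        ((measurableSet_lt measurable_const hτ).inter
          (measurableSet_eq_fun measurable_snd (measurable_fst.add (hτ.smul_const v)))))
    have hΨΦ : ∀ r, Ψ (Φ r) = r := by
      intro r
      rw [hΨa]
      simp only [Φ]
      ext
      · simp only [Prod.fst_add, Prod.smul_fst, Prod.snd_add, Prod.smul_snd, smul_eq_mul]
        field_simp
        rw [hδ]; ring
      · simp only [Prod.fst_add, Prod.smul_fst, Prod.snd_add, Prod.smul_snd, smul_eq_mul]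
        field_simp
        rw [hδ]; ring
    have key : ∀ᵐ q ∂(θ.map (Prod.map Φ Φ)), q.1 ∈ D ∧ q.2 ∈ D ∧ 0 < (Ψ q.2).2 - (Ψ q.1).2 ∧
          q.2 = q.1 + ((Ψ q.2).2 - (Ψ q.1).2) • v := by
      rw [ae_map_iff hm.aemeasurable hms]
      filter_upwards [h3] with q hq
      obtain ⟨a, b, c, d⟩ := hq
      refine ⟨a, b, ?_, ?_⟩
      · simp only [Prod.map_fst, Prod.map_snd, hΨΦ]
        linarith
      · simp only [Prod.map_fst, Prod.map_snd, hΨΦ]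
        simp only [Φ]
        rw [c, sub_smul]
        abel
    filter_upwards [key] with q hq
    exact ⟨hq.1, hq.2.1, _, hq.2.2.1, hq.2.2.2⟩


/-! ### Main consequence of optimality -/

open ProbabilityTheory in
lemma main_pick {μ0 μ1 : Measure (ℝ × ℝ)} [IsProbabilityMeasure μ0]
    (hac : μ0 ≪ (volume : Measure (ℝ × ℝ)))
    {γ : Measure ((ℝ × ℝ) × (ℝ × ℝ))} (hγ : γ ∈ Opt3 μ0 μ1)
    (h1 : costSup γ < ⊤) (h2 : costX γ < ⊤) (h3 : costY γ < ⊤)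
    (κ : Kernel (ℝ × ℝ) (ℝ × ℝ)) [IsMarkovKernel κ] (hκ : μ0 ⊗ₘ κ = γ)
    {Q Q' : Set ((ℝ × ℝ) × (ℝ × ℝ))} (hQ : MeasurableSet Q) (hQ' : MeasurableSet Q')
    (hpos : (μ0 ⊗ₘ (κ ×ₖ κ)) {r | (r.1, r.2.1) ∈ Q ∧ (r.1, r.2.2) ∈ Q'} ≠ 0)
    (e v : ℝ × ℝ) (hdet : e.1 * v.2 - e.2 * v.1 ≠ 0) :
    ∃ (z w w' : ℝ × ℝ) (t : ℝ), 0 < t ∧ (z, w) ∈ Q ∧ (z + t • v, w') ∈ Q' ∧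
      ¬ Bad ((z, w), (z + t • v, w')) := by
  have hmQ : Measurable (fun z => κ z (Prod.mk z ⁻¹' Q)) := Kernel.measurable_kernel_prodMk_left hQ
  have hmQ' : Measurable (fun z => κ z (Prod.mk z ⁻¹' Q')) :=
    Kernel.measurable_kernel_prodMk_left hQ'
  set D : Set (ℝ × ℝ) := {z | κ z (Prod.mk z ⁻¹' Q) ≠ 0 ∧ κ z (Prod.mk z ⁻¹' Q') ≠ 0} with hDdef
  have hD : MeasurableSet D :=
    (hmQ (measurableSet_singleton 0)).compl.inter (hmQ' (measurableSet_singleton 0)).compl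
  have hDpos : μ0 D ≠ 0 := by
    intro h0
    apply hpos
    have hS : MeasurableSet {r : (ℝ × ℝ) × (ℝ × ℝ) × (ℝ × ℝ) |
        (r.1, r.2.1) ∈ Q ∧ (r.1, r.2.2) ∈ Q'} := by
      have m1 : Measurable (fun r : (ℝ × ℝ) × (ℝ × ℝ) × (ℝ × ℝ) => (r.1, r.2.1)) := by fun_prop
      have m2 : Measurable (fun r : (ℝ × ℝ) × (ℝ × ℝ) × (ℝ × ℝ) => (r.1, r.2.2)) := by fun_prop
      exact (m1 hQ).inter (m2 hQ')
    rw [Measure.compProd_apply hS]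
    refine (lintegral_eq_zero_iff (Kernel.measurable_kernel_prodMk_left hS)).2 ?_
    have : ∀ᵐ z ∂μ0, z ∉ D := measure_eq_zero_iff_ae_notMem.1 h0
    filter_upwards [this] with z hz
    have hset : Prod.mk z ⁻¹' {r : (ℝ × ℝ) × (ℝ × ℝ) × (ℝ × ℝ) |
        (r.1, r.2.1) ∈ Q ∧ (r.1, r.2.2) ∈ Q'} = (Prod.mk z ⁻¹' Q) ×ˢ (Prod.mk z ⁻¹' Q') := by
      ext q; rfl
    rw [hset, Kernel.prod_apply_prod]
    by_contra hne
    exact hz ⟨fun h => hne (by simp [h]), fun h => hne (by simp [h])⟩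
  obtain ⟨θ, hθ, hθ0, hθae⟩ := theta1 hac hD hDpos e v hdet
  have hfin : IsFiniteMeasure θ := by
    constructor
    have : θ.map Prod.fst Set.univ ≤ μ0 Set.univ := (Measure.le_add_right le_rfl).trans hθ _
    rw [Measure.map_apply measurable_fst MeasurableSet.univ, Set.preimage_univ] at this
    exact this.trans_lt (measure_lt_top _ _)
  let K : Kernel ((ℝ × ℝ) × (ℝ × ℝ)) ((ℝ × ℝ) × (ℝ × ℝ)) :=
    (κ.comap Prod.fst measurable_fst) ×ₖ (κ.comap Prod.snd measurable_snd)
  have hKp : ∀ q A B, K q (A ×ˢ B) = κ q.1 A * κ q.2 B := by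
    intro q A B
    simp only [K]
    rw [Kernel.prod_apply_prod, Kernel.comap_apply, Kernel.comap_apply]
  let R : ((ℝ × ℝ) × (ℝ × ℝ)) × ((ℝ × ℝ) × (ℝ × ℝ)) → ((ℝ × ℝ) × (ℝ × ℝ)) × ((ℝ × ℝ) × (ℝ × ℝ)) :=
    fun s => ((s.1.1, s.2.1), (s.1.2, s.2.2))
  have hR : Measurable R := by fun_prop
  have e1 : ((θ ⊗ₘ K).map R).map Prod.fst = (θ.map Prod.fst) ⊗ₘ κ := by
    ext A hA
    rw [Measure.map_map measurable_fst hR, Measure.map_apply (measurable_fst.comp hR) hA,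
      Measure.compProd_apply ((measurable_fst.comp hR) hA), Measure.compProd_apply hA,
      lintegral_map (Kernel.measurable_kernel_prodMk_left hA) measurable_fst]
    refine lintegral_congr fun q => ?_
    have : Prod.mk q ⁻¹' (Prod.fst ∘ R ⁻¹' A) = (Prod.mk q.1 ⁻¹' A) ×ˢ Set.univ := by
      ext s; simp [R]
    rw [this, hKp]; simp
  have e2 : ((θ ⊗ₘ K).map R).map Prod.snd = (θ.map Prod.snd) ⊗ₘ κ := by
    ext A hA
    rw [Measure.map_map measurable_snd hR, Measure.map_apply (measurable_snd.comp hR) hA,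
      Measure.compProd_apply ((measurable_snd.comp hR) hA), Measure.compProd_apply hA,
      lintegral_map (Kernel.measurable_kernel_prodMk_left hA) measurable_snd]
    refine lintegral_congr fun q => ?_
    have : Prod.mk q ⁻¹' (Prod.snd ∘ R ⁻¹' A) = Set.univ ×ˢ (Prod.mk q.2 ⁻¹' A) := by
      ext s; simp [R]
    rw [this, hKp]; simp
  have hle : ((θ ⊗ₘ K).map R).map Prod.fst + ((θ ⊗ₘ K).map R).map Prod.snd ≤ γ := by
    rw [e1, e2, ← Measure.compProd_add_left, ← hκ]
    refine Measure.le_iff.2 fun A hA => ?_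
    rw [Measure.compProd_apply hA, Measure.compProd_apply hA]
    exact lintegral_mono' hθ le_rfl
  have hbad := bad_null hγ h1 h2 h3 _ hle
  have hQQ : (θ ⊗ₘ K).map R (Q ×ˢ Q') ≠ 0 := by
    have hm : MeasurableSet (R ⁻¹' (Q ×ˢ Q')) := hR (hQ.prod hQ')
    rw [Measure.map_apply hR (hQ.prod hQ'), Measure.compProd_apply hm]
    intro h0
    rw [lintegral_eq_zero_iff (Kernel.measurable_kernel_prodMk_left hm)] at h0
    apply hθ0
    rw [← ae_eq_bot, ← Filter.eventually_false_iff_eq_bot]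
    filter_upwards [h0, hθae] with q hq hq'
    have : Prod.mk q ⁻¹' (R ⁻¹' (Q ×ˢ Q')) = (Prod.mk q.1 ⁻¹' Q) ×ˢ (Prod.mk q.2 ⁻¹' Q') := by
      ext s; simp [R]
    rw [this, hKp] at hq
    exact mul_ne_zero hq'.1.1 hq'.2.1.2 hq
  have hline : ∀ᵐ s ∂(θ ⊗ₘ K), ∃ t : ℝ, 0 < t ∧ s.1.2 = s.1.1 + t • v := by
    have h5 : ∀ᵐ q ∂θ, ∃ t : ℝ, 0 < t ∧ q.2 = q.1 + t • v := hθae.mono fun q hq => hq.2.2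
    have hac' : (θ ⊗ₘ K).map Prod.fst ≪ θ := by
      have : (θ ⊗ₘ K).fst = θ := Measure.fst_compProd θ K
      rw [Measure.fst] at this
      rw [this]
    exact ae_of_ae_map measurable_fst.aemeasurable (hac'.ae_le h5)
  obtain ⟨r, ⟨hrQ, ⟨t, ht, htr⟩, hnb⟩⟩ : ∃ r, r ∈ Q ×ˢ Q' ∧
      (∃ t : ℝ, 0 < t ∧ r.2.1 = r.1.1 + t • v) ∧ ¬ Bad r := by
    by_contra! hcon
    apply hQQ
    have h6 : ∀ᵐ r ∂((θ ⊗ₘ K).map R), ¬ Bad r := measure_eq_zero_iff_ae_notMem.1 hbad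
    have h7 : ∀ᵐ s ∂(θ ⊗ₘ K), ¬ Bad (R s) := ae_of_ae_map hR.aemeasurable h6
    rw [Measure.map_apply hR (hQ.prod hQ')]
    refine measure_eq_zero_iff_ae_notMem.2 ?_
    filter_upwards [hline, h7] with s a b c
    exact b (hcon (R s) c a)
  obtain ⟨⟨z, w⟩, ⟨z', w'⟩⟩ := r
  simp only at htr
  subst htr
  exact ⟨z, w, w', t, ht, hrQ.1, hrQ.2, hnb⟩

/-! ### Local geometry -/

/-- Real version of the three costs. -/
def gS (p : (ℝ × ℝ) × (ℝ × ℝ)) : ℝ := (max |p.2.1 - p.1.1| |p.2.2 - p.1.2|) ^ 2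
def gX (p : (ℝ × ℝ) × (ℝ × ℝ)) : ℝ := (p.2.1 - p.1.1) ^ 2
def gY (p : (ℝ × ℝ) × (ℝ × ℝ)) : ℝ := (p.2.2 - p.1.2) ^ 2

lemma fS_eq (p) : fS p = ENNReal.ofReal (gS p) := by
  unfold fS gS
  rw [edist_dist, ← ENNReal.ofReal_pow dist_nonneg, dist_comm, Prod.dist_eq, Real.dist_eq,
    Real.dist_eq]

lemma fX_eq (p) : fX p = ENNReal.ofReal (gX p) := by
  unfold fX gX
  rw [edist_dist, ← ENNReal.ofReal_pow dist_nonneg, dist_comm, Real.dist_eq, sq_abs]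

lemma fY_eq (p) : fY p = ENNReal.ofReal (gY p) := by
  unfold fY gY
  rw [edist_dist, ← ENNReal.ofReal_pow dist_nonneg, dist_comm, Real.dist_eq, sq_abs]

lemma gain_of {f : (ℝ × ℝ) × (ℝ × ℝ) → ℝ≥0∞} {g : (ℝ × ℝ) × (ℝ × ℝ) → ℝ}
    (hf : ∀ p, f p = ENNReal.ofReal (g p)) (hg : ∀ p, 0 ≤ g p) {z w z' w' : ℝ × ℝ}
    (h : g (z, w') + g (z', w) < g (z, w) + g (z', w')) : Gain f ((z, w), (z', w')) := by
  unfold Gain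
  simp only [hf]
  rw [← ENNReal.ofReal_add (hg _) (hg _), ← ENNReal.ofReal_add (hg _) (hg _)]
  exact (ENNReal.ofReal_lt_ofReal_iff_of_nonneg (add_nonneg (hg _) (hg _))).2 h

lemma tie_of {f : (ℝ × ℝ) × (ℝ × ℝ) → ℝ≥0∞} {g : (ℝ × ℝ) × (ℝ × ℝ) → ℝ}
    (hf : ∀ p, f p = ENNReal.ofReal (g p)) (hg : ∀ p, 0 ≤ g p) {z w z' w' : ℝ × ℝ}
    (h : g (z, w') + g (z', w) = g (z, w) + g (z', w')) : Tie f ((z, w), (z', w')) := by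
  unfold Tie
  simp only [hf]
  rw [← ENNReal.ofReal_add (hg _) (hg _), ← ENNReal.ofReal_add (hg _) (hg _), h]

lemma gS_nonneg (p) : 0 ≤ gS p := sq_nonneg _
lemma gX_nonneg (p) : 0 ≤ gX p := sq_nonneg _
lemma gY_nonneg (p) : 0 ≤ gY p := sq_nonneg _

lemma decr1 {ρ a s : ℝ} (hρ : 0 < ρ) (ha : |a| ≤ ρ) (hs : s = 1 ∨ s = -1)
    (h : |a| = ρ → 0 < s * a) :
    ∃ r > 0, ∀ a' t M : ℝ, |a' - a| < r → 0 < t → t < r → |a'| ≤ M → ρ - r < M →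
      |a' - t * s| ≤ M - t := by
  by_cases hq : |a| = ρ
  · have h' := h hq
    refine ⟨ρ / 4, by linarith, fun a' t M h1 h2 h3 h4 h5 => ?_⟩
    rw [abs_lt] at h1
    rw [abs_le] at h4 ⊢
    rcases hs with rfl | rfl
    · rw [abs_of_pos (by linarith)] at hq
      constructor <;> linarith
    · rw [abs_of_neg (by linarith)] at hq
      constructor <;> linarith
  · have hlt : |a| < ρ := lt_of_le_of_ne ha hq
    refine ⟨(ρ - |a|) / 4, by linarith, fun a' t M h1 h2 h3 h4 h5 => ?_⟩
    have h6 : |a' - t * s| ≤ |a'| + t := by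
      refine (abs_sub _ _).trans ?_
      rcases hs with rfl | rfl <;> simp [abs_of_pos h2]
    have h7 : |a'| ≤ |a| + |a' - a| := by
      have := abs_add_le a (a' - a)
      simpa using this
    linarith

lemma max_close {a b a' b' r : ℝ} (ha : |a' - a| < r) (hb : |b' - b| < r) :
    max |a| |b| - r < max |a'| |b'| ∧ max |a'| |b'| < max |a| |b| + r := by
  have := abs_max_sub_max_le_max |a'| |b'| |a| |b|
  have h2 : max |(|a'| - |a|)| |(|b'| - |b|)| < r :=
    max_lt ((abs_abs_sub_abs_le _ _).trans_lt ha) ((abs_abs_sub_abs_le _ _).trans_lt hb)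
  have h3 := abs_lt.1 (this.trans_lt h2)
  constructor <;> linarith

lemma decr {a b s1 s2 : ℝ} (hρ : 0 < max |a| |b|) (hs1 : s1 = 1 ∨ s1 = -1)
    (hs2 : s2 = 1 ∨ s2 = -1) (h1 : |a| = max |a| |b| → 0 < s1 * a)
    (h2 : |b| = max |a| |b| → 0 < s2 * b) :
    ∃ r > 0, ∀ a' b' t : ℝ, |a' - a| < r → |b' - b| < r → 0 < t → t < r →
      max |a' - t * s1| |b' - t * s2| ≤ max |a'| |b'| - t := by
  obtain ⟨r1, hr1, H1⟩ := decr1 hρ (le_max_left _ _) hs1 h1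
  obtain ⟨r2, hr2, H2⟩ := decr1 hρ (le_max_right _ _) hs2 h2
  refine ⟨min r1 r2, lt_min hr1 hr2, fun a' b' t ha hb ht htr => ?_⟩
  have hM := (max_close ha hb).1
  refine max_le ?_ ?_
  · refine H1 a' t _ (ha.trans_le (min_le_left _ _)) ht (htr.trans_le (min_le_left _ _))
      (le_max_left _ _) ?_
    have := min_le_left r1 r2
    linarith
  · refine H2 b' t _ (hb.trans_le (min_le_right _ _)) ht (htr.trans_le (min_le_right _ _))
      (le_max_right _ _) ?_
    have := min_le_right r1 r2
    linarith

lemma incr {a b s1 s2 t : ℝ} (hs1 : s1 = 1 ∨ s1 = -1) (hs2 : s2 = 1 ∨ s2 = -1) (ht : 0 < t) :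
    max |a - t * s1| |b - t * s2| ≤ max |a| |b| + t := by
  have h : ∀ x s : ℝ, (s = 1 ∨ s = -1) → |x - t * s| ≤ |x| + t := by
    intro x s hs
    refine (abs_sub _ _).trans ?_
    rcases hs with rfl | rfl <;> simp [abs_of_pos ht]
  refine max_le ((h a s1 hs1).trans ?_) ((h b s2 hs2).trans ?_)
  · linarith [le_max_left |a| |b|]
  · linarith [le_max_right |a| |b|]

lemma exists_sign (a : ℝ) : ∃ s : ℝ, (s = 1 ∨ s = -1) ∧ (a ≠ 0 → 0 < s * a) := by
  rcases le_or_gt 0 a with h | h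
  · exact ⟨1, Or.inl rfl, fun h0 => by rw [one_mul]; exact lt_of_le_of_ne h (Ne.symm h0)⟩
  · exact ⟨-1, Or.inr rfl, fun _ => by linarith⟩

lemma exists_sign2 {a a' ρ : ℝ} (hρ : 0 < ρ) (h : ¬ (a = a' ∧ |a| = ρ)) :
    ∃ s : ℝ, (s = 1 ∨ s = -1) ∧ (|a| = ρ → 0 < s * a) ∧ (|a'| = ρ → 0 < (-s) * a') := by
  by_cases h1 : |a| = ρ
  · obtain ⟨s, hs, hsa⟩ := exists_sign a
    have ha : a ≠ 0 := by rintro rfl; simp at h1; linarith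
    refine ⟨s, hs, fun _ => hsa ha, fun h2 => ?_⟩
    rcases abs_eq_abs.1 (h1.trans h2.symm) with h3 | h3
    · exact absurd ⟨h3, h1⟩ h
    · have := hsa ha
      rw [h3] at this
      linarith
  · obtain ⟨s, hs, hsa⟩ := exists_sign a'
    refine ⟨-s, ?_, fun h2 => absurd h2 h1, fun h2 => ?_⟩
    · rcases hs with rfl | rfl <;> simp
    · have ha : a' ≠ 0 := by rintro rfl; simp at h2; linarith
      rw [neg_neg]; exact hsa ha

lemma swapAB {z1 w1 w1' z2 z2' w2 w2' s : ℝ} (hs : s = 1 ∨ s = -1)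
    (hz : 0 < s * (z2' - z2)) (hw : |w1 - w1'| < s * (w2 - w2'))
    (h1 : |w2 - z2| ≤ |w1 - z1|) (h2 : |w2' - z2'| ≤ |w1' - z1|) :
    |w2' - z2| ≤ |w1' - z1| ∧ |w2 - z2'| ≤ |w1 - z1| ∧
      (w2' - z2) ^ 2 + (w2 - z2') ^ 2 < (w2 - z2) ^ 2 + (w2' - z2') ^ 2 := by
  have h3 : |w1 - z1| - |w1' - z1| ≤ |w1 - w1'| := by
    have := abs_sub_abs_le_abs_sub (w1 - z1) (w1' - z1)
    simpa using this
  have h4 : |w1' - z1| - |w1 - z1| ≤ |w1 - w1'| := by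
    have := abs_sub_abs_le_abs_sub (w1' - z1) (w1 - z1)
    rw [abs_sub_comm w1 w1']
    simpa using this
  have h5 : 0 < s * (w2 - w2') := (abs_nonneg _).trans_lt hw
  rw [abs_le] at h1 h2
  rcases hs with rfl | rfl
  · refine ⟨abs_le.2 ⟨by linarith, by linarith⟩, abs_le.2 ⟨by linarith, by linarith⟩, ?_⟩
    nlinarith [mul_pos hz h5]
  · refine ⟨abs_le.2 ⟨by linarith, by linarith⟩, abs_le.2 ⟨by linarith, by linarith⟩, ?_⟩
    nlinarith [mul_pos hz h5]

/-- Coordinates that realise the sup norm of the displacement. -/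
def Dom1 (p : (ℝ × ℝ) × (ℝ × ℝ)) : Prop := |p.2.2 - p.1.2| ≤ |p.2.1 - p.1.1|
def Dom2 (p : (ℝ × ℝ) × (ℝ × ℝ)) : Prop := |p.2.1 - p.1.1| ≤ |p.2.2 - p.1.2|

lemma sq_lt_aux {A B N N' t : ℝ} (hA0 : 0 ≤ A) (hB0 : 0 ≤ B) (hA : A ≤ N - t) (hB : B ≤ N' + t)
    (ht : 0 < t) (h : t < N - N') : A ^ 2 + B ^ 2 < N ^ 2 + N' ^ 2 := by
  have h1 : A ^ 2 ≤ (N - t) ^ 2 := pow_le_pow_left₀ hA0 hA 2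
  have h2 : B ^ 2 ≤ (N' + t) ^ 2 := pow_le_pow_left₀ hB0 hB 2
  nlinarith

lemma sq_lt_aux' {A B N N' t : ℝ} (hA0 : 0 ≤ A) (hB0 : 0 ≤ B) (hA : A ≤ N - t) (hB : B ≤ N' - t)
    (ht : 0 < t) : A ^ 2 + B ^ 2 < N ^ 2 + N' ^ 2 := by
  have h1 : A ^ 2 ≤ (N - t) ^ 2 := pow_le_pow_left₀ hA0 hA 2
  have h2 : B ^ 2 ≤ (N' - t) ^ 2 := pow_le_pow_left₀ hB0 hB 2
  nlinarith

lemma core_local (z0 w0 w0' : ℝ × ℝ) (hne : w0 ≠ w0') :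
    ∃ v : ℝ × ℝ, v ≠ 0 ∧ ∃ r > 0, ∀ (z w z' w' : ℝ × ℝ) (t : ℝ), 0 < t → z' = z + t • v →
      dist z z0 < r → dist z' z0 < r → dist w w0 < r → dist w' w0' < r →
      (Dom1 (z0, w0) → Dom1 (z, w)) → (Dom2 (z0, w0) → Dom2 (z, w)) →
      (Dom1 (z0, w0') → Dom1 (z', w')) → (Dom2 (z0, w0') → Dom2 (z', w')) →
      Bad ((z, w), (z', w')) := by
  obtain ⟨zx, zy⟩ := z0
  obtain ⟨wx, wy⟩ := w0
  obtain ⟨ux, uy⟩ := w0'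
  set a := wx - zx with ha
  set b := wy - zy with hb
  set a' := ux - zx with ha'
  set b' := uy - zy with hb'
  have close : ∀ {p q : ℝ × ℝ} {r : ℝ}, dist p q < r → |p.1 - q.1| < r ∧ |p.2 - q.2| < r := by
    intro p q r h
    rw [Prod.dist_eq, max_lt_iff, Real.dist_eq, Real.dist_eq] at h
    exact h
  have disp : ∀ {x y x0 y0 r : ℝ}, |x - x0| < r / 2 → |y - y0| < r / 2 →
      |(x - y) - (x0 - y0)| < r := by
    intro x y x0 y0 r h1 h2
    rw [abs_lt] at h1 h2 ⊢
    constructor <;> linarith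
  have tsmall : ∀ {x y x0 r s t : ℝ}, (s = 1 ∨ s = -1) → y = x + t * s → 0 < t →
      |x - x0| < r / 2 → |y - x0| < r / 2 → t < r := by
    intro x y x0 r s t hs hy ht h1 h2
    rw [abs_lt] at h1 h2
    rcases hs with rfl | rfl <;> linarith
  rcases lt_trichotomy (max |a| |b|) (max |a'| |b'|) with hlt | heq | hgt
  · -- first norm smaller
    obtain ⟨s1, hs1, hs1a⟩ := exists_sign a'
    obtain ⟨s2, hs2, hs2a⟩ := exists_sign b'
    have hρ : 0 < max |a'| |b'| := lt_of_le_of_lt (le_max_of_le_left (abs_nonneg a)) hlt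
    obtain ⟨r, hr, H⟩ := decr hρ hs1 hs2
      (fun h => hs1a (by intro h0; rw [h0, abs_zero] at h; rw [h0, abs_zero] at hρ; linarith))
      (fun h => hs2a (by intro h0; rw [h0, abs_zero] at h; rw [h0, abs_zero] at hρ; linarith))
    have hs1' : -s1 = 1 ∨ -s1 = -1 := by rcases hs1 with rfl | rfl <;> simp
    have hs2' : -s2 = 1 ∨ -s2 = -1 := by rcases hs2 with rfl | rfl <;> simp
    refine ⟨(-s1, -s2), ?_, (min r ((max |a'| |b'| - max |a| |b|) / 4)) / 2,
      half_pos (lt_min hr (by linarith)), ?_⟩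
    · intro h
      have := congrArg Prod.fst h
      simp at this
      rcases hs1 with rfl | rfl <;> simp at this
    rintro ⟨x, y⟩ ⟨p, q⟩ z' ⟨p', q'⟩ t ht rfl c1 c2 c3 c4 - - - -
    obtain ⟨c11, c12⟩ := close c1
    obtain ⟨c21, c22⟩ := close c2
    obtain ⟨c31, c32⟩ := close c3
    obtain ⟨c41, c42⟩ := close c4
    simp only [Prod.fst_add, Prod.snd_add, Prod.smul_fst, Prod.smul_snd, smul_eq_mul]
      at c11 c12 c21 c22 c31 c32 c41 c42
    have d1 := disp c31 c11
    have d2 := disp c32 c12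
    have d3 := disp c41 c21
    have d4 := disp c42 c22
    have ht' := tsmall hs1' rfl ht c11 c21
    have m1 := (max_close d1 d2).2
    have m2 := (max_close d3 d4).1
    have k1 := min_le_left r ((max |a'| |b'| - max |a| |b|) / 4)
    have k2 := min_le_right r ((max |a'| |b'| - max |a| |b|) / 4)
    have HH := H _ _ t (d3.trans_le k1) (d4.trans_le k1) ht (ht'.trans_le k1)
    have II := incr (a := p - x) (b := q - y) hs1' hs2' ht
    refine Or.inl (gain_of fS_eq gS_nonneg ?_)
    simp only [gS, Prod.fst_add, Prod.snd_add, Prod.smul_fst, Prod.smul_snd, smul_eq_mul]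
    rw [show p' - (x + t * -s1) - t * s1 = p' - x by ring,
      show q' - (y + t * -s2) - t * s2 = q' - y by ring] at HH
    rw [show p - x - t * -s1 = p - (x + t * -s1) by ring,
      show q - y - t * -s2 = q - (y + t * -s2) by ring] at II
    rw [add_comm (max |p - x| |q - y| ^ 2)]
    exact sq_lt_aux (le_max_of_le_left (abs_nonneg _)) (le_max_of_le_left (abs_nonneg _)) HH II ht
      (by linarith)
  · -- equal norms
    have hρ : 0 < max |a| |b| := by
      rcases lt_or_eq_of_le (le_max_of_le_left (abs_nonneg a) : (0 : ℝ) ≤ max |a| |b|) with h | h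
      · exact h
      · exfalso
        apply hne
        have e1 : a = 0 := abs_eq_zero.1 (le_antisymm (h ▸ le_max_left _ _) (abs_nonneg _))
        have e2 : b = 0 := abs_eq_zero.1 (le_antisymm (h ▸ le_max_right _ _) (abs_nonneg _))
        rw [heq] at h
        have e3 : a' = 0 := abs_eq_zero.1 (le_antisymm (h ▸ le_max_left _ _) (abs_nonneg _))
        have e4 : b' = 0 := abs_eq_zero.1 (le_antisymm (h ▸ le_max_right _ _) (abs_nonneg _))
        ext
        · simp only; linarith
        · simp only; linarith
    by_cases hA : a = a' ∧ |a| = max |a| |b|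
    · -- Case A
      obtain ⟨hA1, hA2⟩ := hA
      have hbb : b - b' ≠ 0 := by
        intro h
        apply hne
        ext
        · simp only; linarith
        · simp only; linarith
      obtain ⟨s, hs, hsb⟩ := exists_sign (b - b')
      have hsb := hsb hbb
      refine ⟨(0, s), ?_, s * (b - b') / 8, by linarith, ?_⟩
      · intro h
        have := congrArg Prod.snd h
        simp at this
        rcases hs with rfl | rfl <;> simp at this
      rintro ⟨x, y⟩ ⟨p, q⟩ z' ⟨p', q'⟩ t ht rfl c1 c2 c3 c4 D1 - D2 -
      obtain ⟨c31, c32⟩ := close c3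
      obtain ⟨c41, c42⟩ := close c4
      simp only at c31 c32 c41 c42
      have D1 := D1 (by rw [Dom1]; exact hA2 ▸ le_max_right _ _)
      have D2 := D2 (by
        rw [Dom1]
        change |b'| ≤ |a'|
        rw [← hA1, hA2, heq]; exact le_max_right _ _)
      simp only [Dom1, Prod.fst_add, Prod.snd_add, Prod.smul_fst, Prod.smul_snd, smul_eq_mul,
        mul_zero, add_zero] at D1 D2
      have hz : 0 < s * ((y + t * s) - y) := by
        rcases hs with rfl | rfl <;> linarith
      have hw : |p - p'| < s * (q - q') := by
        rw [abs_lt] at c31 c32 c41 c42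
        rw [abs_lt]
        rcases hs with rfl | rfl <;> constructor <;> linarith
      obtain ⟨S1, S2, S3⟩ := swapAB hs hz hw D1 D2
      refine Or.inr (Or.inr ⟨tie_of fS_eq gS_nonneg ?_, tie_of fX_eq gX_nonneg ?_,
        gain_of fY_eq gY_nonneg ?_⟩)
      · simp only [gS, Prod.fst_add, Prod.snd_add, Prod.smul_fst, Prod.smul_snd, smul_eq_mul,
          mul_zero, add_zero]
        rw [max_eq_left S1, max_eq_left S2, max_eq_left D1, max_eq_left D2]; ring
      · simp only [gX, Prod.fst_add, Prod.snd_add, Prod.smul_fst, Prod.smul_snd, smul_eq_mul,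
          mul_zero, add_zero]
        ring
      · simp only [gY, Prod.fst_add, Prod.snd_add, Prod.smul_fst, Prod.smul_snd, smul_eq_mul,
          mul_zero, add_zero]
        exact S3
    · by_cases hB : b = b' ∧ |b| = max |a| |b|
      · -- Case B
        obtain ⟨hB1, hB2⟩ := hB
        have haa : a - a' ≠ 0 := by
          intro h
          apply hne
          ext
          · simp only; linarith
          · simp only; linarith
        obtain ⟨s, hs, hsb⟩ := exists_sign (a - a')
        have hsb := hsb haa
        refine ⟨(s, 0), ?_, s * (a - a') / 8, by linarith, ?_⟩
        · intro h
          have := congrArg Prod.fst h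
          simp at this
          rcases hs with rfl | rfl <;> simp at this
        rintro ⟨x, y⟩ ⟨p, q⟩ z' ⟨p', q'⟩ t ht rfl c1 c2 c3 c4 - D1 - D2
        obtain ⟨c31, c32⟩ := close c3
        obtain ⟨c41, c42⟩ := close c4
        simp only at c31 c32 c41 c42
        have D1 := D1 (by rw [Dom2]; exact hB2 ▸ le_max_left _ _)
        have D2 := D2 (by
          rw [Dom2]
          change |a'| ≤ |b'|
          rw [← hB1, hB2, heq]; exact le_max_left _ _)
        simp only [Dom2, Prod.fst_add, Prod.snd_add, Prod.smul_fst, Prod.smul_snd, smul_eq_mul,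
          mul_zero, add_zero] at D1 D2
        have hz : 0 < s * ((x + t * s) - x) := by
          rcases hs with rfl | rfl <;> linarith
        have hw : |q - q'| < s * (p - p') := by
          rw [abs_lt] at c31 c32 c41 c42
          rw [abs_lt]
          rcases hs with rfl | rfl <;> constructor <;> linarith
        obtain ⟨S1, S2, S3⟩ := swapAB hs hz hw D1 D2
        refine Or.inr (Or.inl ⟨tie_of fS_eq gS_nonneg ?_, gain_of fX_eq gX_nonneg ?_⟩)
        · simp only [gS, Prod.fst_add, Prod.snd_add, Prod.smul_fst, Prod.smul_snd, smul_eq_mul,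
            mul_zero, add_zero]
          rw [max_eq_right S1, max_eq_right S2, max_eq_right D1, max_eq_right D2]; ring
        · simp only [gX, Prod.fst_add, Prod.snd_add, Prod.smul_fst, Prod.smul_snd, smul_eq_mul,
            mul_zero, add_zero]
          exact S3
      · obtain ⟨s1, hs1, h1, h1'⟩ := exists_sign2 hρ hA
        obtain ⟨s2, hs2, h2, h2'⟩ := exists_sign2 hρ hB
        have hs1' : -s1 = 1 ∨ -s1 = -1 := by rcases hs1 with rfl | rfl <;> simp
        have hs2' : -s2 = 1 ∨ -s2 = -1 := by rcases hs2 with rfl | rfl <;> simp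
        obtain ⟨r1, hr1, H1⟩ := decr hρ hs1 hs2 h1 h2
        rw [heq] at h1' h2' hρ
        obtain ⟨r2, hr2, H2⟩ := decr hρ hs1' hs2' h1' h2'
        refine ⟨(s1, s2), ?_, (min r1 r2) / 2, half_pos (lt_min hr1 hr2), ?_⟩
        · intro h
          have := congrArg Prod.fst h
          simp at this
          rcases hs1 with rfl | rfl <;> simp at this
        rintro ⟨x, y⟩ ⟨p, q⟩ z' ⟨p', q'⟩ t ht rfl c1 c2 c3 c4 - - - -
        obtain ⟨c11, c12⟩ := close c1
        obtain ⟨c21, c22⟩ := close c2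
        obtain ⟨c31, c32⟩ := close c3
        obtain ⟨c41, c42⟩ := close c4
        simp only [Prod.fst_add, Prod.snd_add, Prod.smul_fst, Prod.smul_snd, smul_eq_mul]
          at c11 c12 c21 c22 c31 c32 c41 c42
        have d1 := disp c31 c11
        have d2 := disp c32 c12
        have d3 := disp c41 c21
        have d4 := disp c42 c22
        have ht' := tsmall hs1 rfl ht c11 c21
        have k1 := min_le_left r1 r2
        have k2 := min_le_right r1 r2
        have HH := H1 _ _ t (d1.trans_le k1) (d2.trans_le k1) ht (ht'.trans_le k1)
        have II := H2 _ _ t (d3.trans_le k2) (d4.trans_le k2) ht (ht'.trans_le k2)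
        refine Or.inl (gain_of fS_eq gS_nonneg ?_)
        simp only [gS, Prod.fst_add, Prod.snd_add, Prod.smul_fst, Prod.smul_snd, smul_eq_mul]
        rw [show p' - (x + t * s1) - t * -s1 = p' - x by ring,
          show q' - (y + t * s2) - t * -s2 = q' - y by ring] at II
        rw [show p - x - t * s1 = p - (x + t * s1) by ring,
          show q - y - t * s2 = q - (y + t * s2) by ring] at HH
        rw [add_comm]
        exact sq_lt_aux' (le_max_of_le_left (abs_nonneg _)) (le_max_of_le_left (abs_nonneg _))
          HH II ht
  · -- first norm larger
    obtain ⟨s1, hs1, hs1a⟩ := exists_sign a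
    obtain ⟨s2, hs2, hs2a⟩ := exists_sign b
    have hρ : 0 < max |a| |b| := lt_of_le_of_lt (le_max_of_le_left (abs_nonneg a')) hgt
    obtain ⟨r, hr, H⟩ := decr hρ hs1 hs2
      (fun h => hs1a (by intro h0; rw [h0, abs_zero] at h; rw [h0, abs_zero] at hρ; linarith))
      (fun h => hs2a (by intro h0; rw [h0, abs_zero] at h; rw [h0, abs_zero] at hρ; linarith))
    have hs1' : -s1 = 1 ∨ -s1 = -1 := by rcases hs1 with rfl | rfl <;> simp
    have hs2' : -s2 = 1 ∨ -s2 = -1 := by rcases hs2 with rfl | rfl <;> simp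
    refine ⟨(s1, s2), ?_, (min r ((max |a| |b| - max |a'| |b'|) / 4)) / 2,
      half_pos (lt_min hr (by linarith)), ?_⟩
    · intro h
      have := congrArg Prod.fst h
      simp at this
      rcases hs1 with rfl | rfl <;> simp at this
    rintro ⟨x, y⟩ ⟨p, q⟩ z' ⟨p', q'⟩ t ht rfl c1 c2 c3 c4 - - - -
    obtain ⟨c11, c12⟩ := close c1
    obtain ⟨c21, c22⟩ := close c2
    obtain ⟨c31, c32⟩ := close c3
    obtain ⟨c41, c42⟩ := close c4
    simp only [Prod.fst_add, Prod.snd_add, Prod.smul_fst, Prod.smul_snd, smul_eq_mul]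
      at c11 c12 c21 c22 c31 c32 c41 c42
    have d1 := disp c31 c11
    have d2 := disp c32 c12
    have d3 := disp c41 c21
    have d4 := disp c42 c22
    have ht' := tsmall hs1 rfl ht c11 c21
    have m1 := (max_close d1 d2).1
    have m2 := (max_close d3 d4).2
    have k1 := min_le_left r ((max |a| |b| - max |a'| |b'|) / 4)
    have k2 := min_le_right r ((max |a| |b| - max |a'| |b'|) / 4)
    have HH := H _ _ t (d1.trans_le k1) (d2.trans_le k1) ht (ht'.trans_le k1)
    have II := incr (a := p' - (x + t * s1)) (b := q' - (y + t * s2)) hs1' hs2' ht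
    refine Or.inl (gain_of fS_eq gS_nonneg ?_)
    simp only [gS, Prod.fst_add, Prod.snd_add, Prod.smul_fst, Prod.smul_snd, smul_eq_mul]
    rw [show p' - (x + t * s1) - t * -s1 = p' - x by ring,
      show q' - (y + t * s2) - t * -s2 = q' - y by ring] at II
    rw [show p - x - t * s1 = p - (x + t * s1) by ring,
      show q - y - t * s2 = q - (y + t * s2) by ring] at HH
    rw [add_comm]
    exact sq_lt_aux (le_max_of_le_left (abs_nonneg _)) (le_max_of_le_left (abs_nonneg _)) HH II ht
      (by linarith)

/-! ### Conclusion -/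

lemma measurableSet_dom1 : MeasurableSet {p | Dom1 p} :=
  measurableSet_le (by fun_prop) (by fun_prop)

lemma measurableSet_dom2 : MeasurableSet {p | Dom2 p} :=
  measurableSet_le (by fun_prop) (by fun_prop)

/-- Which coordinates are dominant. -/
def cl (p : (ℝ × ℝ) × (ℝ × ℝ)) : Bool × Bool := (decide (Dom1 p), decide (Dom2 p))

lemma measurableSet_cl (b : Bool × Bool) : MeasurableSet {p | cl p = b} := by
  obtain ⟨b1, b2⟩ := b
  have h1 : MeasurableSet {p | decide (Dom1 p) = b1} := by
    cases b1
    · simp only [decide_eq_false_iff_not]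
      exact measurableSet_dom1.compl
    · simpa using measurableSet_dom1
  have h2 : MeasurableSet {p | decide (Dom2 p) = b2} := by
    cases b2
    · simp only [decide_eq_false_iff_not]
      exact measurableSet_dom2.compl
    · simpa using measurableSet_dom2
  have : {p | cl p = (b1, b2)} = {p | decide (Dom1 p) = b1} ∩ {p | decide (Dom2 p) = b2} := by
    ext p; simp [cl]
  rw [this]
  exact h1.inter h2

lemma dom1_of_cl {p q : (ℝ × ℝ) × (ℝ × ℝ)} (h : cl p = cl q) : Dom1 q → Dom1 p := by
  have := congrArg Prod.fst h
  simp only [cl, decide_eq_decide] at this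
  exact this.2

lemma dom2_of_cl {p q : (ℝ × ℝ) × (ℝ × ℝ)} (h : cl p = cl q) : Dom2 q → Dom2 p := by
  have := congrArg Prod.snd h
  simp only [cl, decide_eq_decide] at this
  exact this.2

open ProbabilityTheory in
lemma diag_null {μ0 μ1 : Measure (ℝ × ℝ)} [IsProbabilityMeasure μ0]
    (hac : μ0 ≪ (volume : Measure (ℝ × ℝ)))
    {γ : Measure ((ℝ × ℝ) × (ℝ × ℝ))} (hγ : γ ∈ Opt3 μ0 μ1)
    (h1 : costSup γ < ⊤) (h2 : costX γ < ⊤) (h3 : costY γ < ⊤)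
    (κ : Kernel (ℝ × ℝ) (ℝ × ℝ)) [IsMarkovKernel κ] (hκ : μ0 ⊗ₘ κ = γ) :
    (μ0 ⊗ₘ (κ ×ₖ κ)) {r | r.2.1 ≠ r.2.2} = 0 := by
  have key : ∀ b : (Bool × Bool) × (Bool × Bool), (μ0 ⊗ₘ (κ ×ₖ κ))
      {r | r.2.1 ≠ r.2.2 ∧ cl (r.1, r.2.1) = b.1 ∧ cl (r.1, r.2.2) = b.2} = 0 := by
    intro b
    by_contra hne
    obtain ⟨⟨z0, w0, w0'⟩, ⟨hw, hb1, hb2⟩, hpos⟩ :=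
      exists_mem_forall_mem_nhdsWithin_pos_measure hne
    simp only at hw hb1 hb2
    obtain ⟨v, hv, r, hr, H⟩ := core_local z0 w0 w0' hw
    let Q : Set ((ℝ × ℝ) × (ℝ × ℝ)) := (Metric.ball z0 r ×ˢ Metric.ball w0 r) ∩ {p | cl p = b.1}
    let Q' : Set ((ℝ × ℝ) × (ℝ × ℝ)) := (Metric.ball z0 r ×ˢ Metric.ball w0' r) ∩ {p | cl p = b.2}
    have hQ : MeasurableSet Q :=
      (measurableSet_ball.prod measurableSet_ball).inter (measurableSet_cl _)
    have hQ' : MeasurableSet Q' :=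
      (measurableSet_ball.prod measurableSet_ball).inter (measurableSet_cl _)
    have hp := hpos {r | (r.1, r.2.1) ∈ Q ∧ (r.1, r.2.2) ∈ Q'} (by
      have hU : Metric.ball z0 r ×ˢ (Metric.ball w0 r ×ˢ Metric.ball w0' r) ∈
          nhds (z0, w0, w0') :=
        prod_mem_nhds (Metric.ball_mem_nhds _ hr)
          (prod_mem_nhds (Metric.ball_mem_nhds _ hr) (Metric.ball_mem_nhds _ hr))
      filter_upwards [mem_nhdsWithin_of_mem_nhds hU, self_mem_nhdsWithin] with s hs hs'
      exact ⟨⟨⟨hs.1, hs.2.1⟩, hs'.2.1⟩, ⟨⟨hs.1, hs.2.2⟩, hs'.2.2⟩⟩)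
    have hdet : (v.2, -v.1).1 * v.2 - (v.2, -v.1).2 * v.1 ≠ 0 := by
      intro h
      apply hv
      have e1 : v.2 * v.2 + v.1 * v.1 = 0 := by simpa using h
      have e2 : v.1 = 0 := by nlinarith [mul_self_nonneg v.1, mul_self_nonneg v.2]
      have e3 : v.2 = 0 := by nlinarith [mul_self_nonneg v.1, mul_self_nonneg v.2]
      exact Prod.ext e2 e3
    obtain ⟨z, w, w', t, ht, hzw, hzw', hnb⟩ :=
      main_pick hac hγ h1 h2 h3 κ hκ hQ hQ' hp.ne' (v.2, -v.1) v hdet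
    apply hnb
    have c1 : cl (z, w) = cl (z0, w0) := hzw.2.trans hb1.symm
    have c2 : cl (z + t • v, w') = cl (z0, w0') := hzw'.2.trans hb2.symm
    exact H z w _ w' t ht rfl hzw.1.1 hzw'.1.1 hzw.1.2 hzw'.1.2 (dom1_of_cl c1) (dom2_of_cl c1)
      (dom1_of_cl c2) (dom2_of_cl c2)
  refine measure_mono_null ?_ (measure_iUnion_null key)
  intro r hr
  exact Set.mem_iUnion.2 ⟨(cl (r.1, r.2.1), cl (r.1, r.2.2)), hr, rfl, rfl⟩

lemma eq_map_of_ae {μ0 : Measure (ℝ × ℝ)} {γ : Measure ((ℝ × ℝ) × (ℝ × ℝ))}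
    (h : γ.map Prod.fst = μ0) {T : ℝ × ℝ → ℝ × ℝ} (hT : Measurable T)
    (hae : ∀ᵐ p ∂γ, p.2 = T p.1) : γ = μ0.map (fun z => (z, T z)) := by
  rw [← h, Measure.map_map (by fun_prop) measurable_fst]
  conv_lhs => rw [← Measure.map_id (μ := γ)]
  refine Measure.map_congr ?_
  filter_upwards [hae] with p hp
  exact Prod.ext rfl hp

open ProbabilityTheory in
lemma graph_of_opt3 {μ0 μ1 : Measure (ℝ × ℝ)} [IsProbabilityMeasure μ0]
    (hm0 : ∫⁻ z, (‖z‖₊ : ℝ≥0∞) ^ 2 ∂μ0 < ⊤) (hm1 : ∫⁻ z, (‖z‖₊ : ℝ≥0∞) ^ 2 ∂μ1 < ⊤)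
    (hac : μ0 ≪ (volume : Measure (ℝ × ℝ)))
    {γ : Measure ((ℝ × ℝ) × (ℝ × ℝ))} (hγ : γ ∈ Opt3 μ0 μ1) :
    ∃ T : ℝ × ℝ → ℝ × ℝ, Measurable T ∧ ∀ᵐ p ∂γ, p.2 = T p.1 := by
  obtain ⟨h1, h2, h3⟩ := cost_finite hγ.1.1.1 hm0 hm1
  have : IsProbabilityMeasure γ := hγ.1.1.1.1
  have hfst : γ.fst = μ0 := hγ.1.1.1.2.1
  have hκ : μ0 ⊗ₘ γ.condKernel = γ := by
    have := γ.disintegrate γ.condKernel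
    rwa [hfst] at this
  set κ := γ.condKernel with hκdef
  have hd := diag_null hac hγ h1 h2 h3 κ hκ
  have hTm : StronglyMeasurable (fun z => ∫ w, w ∂(κ z)) :=
    (stronglyMeasurable_id : StronglyMeasurable (fun w : ℝ × ℝ => w)).integral_kernel
  refine ⟨fun z => ∫ w, w ∂(κ z), hTm.measurable, ?_⟩
  have hae : ∀ᵐ r ∂(μ0 ⊗ₘ (κ ×ₖ κ)), r.2.1 = r.2.2 := by
    rw [ae_iff]; exact hd
  have hae2 := Measure.ae_ae_of_ae_compProd hae
  rw [← hκ]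
  refine Measure.ae_compProd_of_ae_ae
    (measurableSet_eq_fun measurable_snd (hTm.measurable.comp measurable_fst)) ?_
  filter_upwards [hae2] with z hz
  rw [Kernel.prod_apply] at hz
  have hz2 := Measure.ae_ae_of_ae_prod hz
  obtain ⟨w, hw⟩ := hz2.exists
  simp only at hw
  have hT : ∫ w, w ∂(κ z) = w := by
    rw [integral_congr_ae (g := fun _ => w) (hw.mono fun x hx => hx.symm)]
    simp
  filter_upwards [hw] with w' hw'
  rw [hT, hw']

lemma half_cost (γ γ' : Measure ((ℝ × ℝ) × (ℝ × ℝ))) (f : (ℝ × ℝ) × (ℝ × ℝ) → ℝ≥0∞)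
    (h : ∫⁻ p, f p ∂γ = ∫⁻ p, f p ∂γ') :
    ∫⁻ p, f p ∂((2 : ℝ≥0∞)⁻¹ • (γ + γ')) = ∫⁻ p, f p ∂γ := by
  rw [lintegral_smul_measure, lintegral_add_measure, ← h, ← two_mul, smul_eq_mul, ← mul_assoc,
    ENNReal.inv_mul_cancel (by simp) (by simp), one_mul]

lemma half_meas (μ : Measure (ℝ × ℝ)) : (2 : ℝ≥0∞)⁻¹ • (μ + μ) = μ := by
  rw [← two_smul ℝ≥0∞ μ, smul_smul, ENNReal.inv_mul_cancel (by simp) (by simp), one_smul]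

lemma half_opt3 {μ0 μ1 : Measure (ℝ × ℝ)} {γ γ' : Measure ((ℝ × ℝ) × (ℝ × ℝ))}
    (hγ : γ ∈ Opt3 μ0 μ1) (hγ' : γ' ∈ Opt3 μ0 μ1) :
    (2 : ℝ≥0∞)⁻¹ • (γ + γ') ∈ Opt3 μ0 μ1 := by
  have e1 : costSup γ = costSup γ' :=
    le_antisymm (hγ.1.1.2 _ hγ'.1.1.1) (hγ'.1.1.2 _ hγ.1.1.1)
  have e2 : costX γ = costX γ' := le_antisymm (hγ.1.2 _ hγ'.1.1) (hγ'.1.2 _ hγ.1.1)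
  have e3 : costY γ = costY γ' := le_antisymm (hγ.2 _ hγ'.1) (hγ'.2 _ hγ.1)
  have f1 : costSup ((2 : ℝ≥0∞)⁻¹ • (γ + γ')) = costSup γ := half_cost _ _ _ e1
  have f2 : costX ((2 : ℝ≥0∞)⁻¹ • (γ + γ')) = costX γ := half_cost _ _ _ e2
  have f3 : costY ((2 : ℝ≥0∞)⁻¹ • (γ + γ')) = costY γ := half_cost _ _ _ e3
  have hc : (2 : ℝ≥0∞)⁻¹ • (γ + γ') ∈ Couplings μ0 μ1 := by
    obtain ⟨hp, a1, a2⟩ := hγ.1.1.1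
    obtain ⟨hp', b1, b2⟩ := hγ'.1.1.1
    refine ⟨⟨?_⟩, ?_, ?_⟩
    · rw [Measure.smul_apply, Measure.add_apply, measure_univ, measure_univ, smul_eq_mul,
        one_add_one_eq_two, ENNReal.inv_mul_cancel (by simp) (by simp)]
    · rw [Measure.map_smul, Measure.map_add _ _ measurable_fst, a1, b1, half_meas]
    · rw [Measure.map_smul, Measure.map_add _ _ measurable_snd, a2, b2, half_meas]
  refine ⟨⟨⟨hc, fun g hg => ?_⟩, fun g hg => ?_⟩, fun g hg => ?_⟩
  · rw [f1]; exact hγ.1.1.2 g hg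
  · rw [f2]; exact hγ.1.2 g hg
  · rw [f3]; exact hγ.2 g hg

/-- Proposition 3.2: if μ0 ≪ L², then Opt3(μ0,μ1) is a singleton, induced by an optimal map. -/
theorem opt3_singleton_induced_by_map
    (μ0 μ1 : Measure (ℝ × ℝ)) [IsProbabilityMeasure μ0] [IsProbabilityMeasure μ1]
    (hm0 : ∫⁻ z, (‖z‖₊ : ℝ≥0∞) ^ 2 ∂μ0 < ⊤) (hm1 : ∫⁻ z, (‖z‖₊ : ℝ≥0∞) ^ 2 ∂μ1 < ⊤)
    (hac : μ0 ≪ (volume : Measure (ℝ × ℝ))) :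
    ∃ T : ℝ × ℝ → ℝ × ℝ, Measurable T ∧
      Opt3 μ0 μ1 = {μ0.map (fun z => (z, T z))} := by
  obtain ⟨γ0, hγ0⟩ := opt3_nonempty μ0 μ1
  obtain ⟨T, hT, hae⟩ := graph_of_opt3 hm0 hm1 hac hγ0
  have h0 := eq_map_of_ae hγ0.1.1.1.2.1 hT hae
  refine ⟨T, hT, ?_⟩
  rw [← h0]
  ext γ
  refine ⟨fun hγ => ?_, fun hγ => by rw [Set.mem_singleton_iff.1 hγ]; exact hγ0⟩
  obtain ⟨S, hS, haeS⟩ := graph_of_opt3 hm0 hm1 hac (half_opt3 hγ0 hγ)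
  have hS2 : ∀ᵐ p ∂(γ0 + γ), p.2 = S p.1 := by
    rw [ae_iff] at haeS ⊢
    rw [Measure.smul_apply, smul_eq_mul, mul_eq_zero] at haeS
    rcases haeS with h | h
    · simp at h
    · exact h
  obtain ⟨hA, hB⟩ := ae_add_measure_iff.1 hS2
  rw [Set.mem_singleton_iff, eq_map_of_ae hγ0.1.1.1.2.1 hS hA, eq_map_of_ae hγ.1.1.1.2.1 hS hB]

end
end

section
/- Let Γ ⊆ ℝ² × ℝ² satisfy the three cyclical monotonicity properties (i)–(iii), let T : ℝ² → ℝ² be a map with components T = (T1, T2), and let F = {(x,y) ∈ ℝ² : ((x,y), T(x,y)) ∈ Γ}. Then: (a) for all (x,y1), (x,y2) ∈ F with y1 ≠ y2 and T1(x,y1) = T1(x,y2), one has (T2(x,y1) − T2(x,y2))/(y1 − y2) ≥ 0; (b) for all (x1,y), (x2,y) ∈ F with x1 ≠ x2 and T2(x1,y) = T2(x2,y), one has (T1(x1,y) − T1(x2,y))/(x1 − x2) ≥ 0. -/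
open MeasureTheory ENNReal
open scoped Classical

noncomputable section

/-- Lemma 3.3: monotonicity of the optimal map on vertical and horizontal lines, from the
three cyclical monotonicity properties of Γ. -/
theorem optimal_map_monotone_on_lines
    (Γ : Set ((ℝ × ℝ) × (ℝ × ℝ)))
    (hcyc1 : ∀ p ∈ Γ, ∀ q ∈ Γ,
      ‖p.1 - p.2‖ ^ 2 + ‖q.1 - q.2‖ ^ 2 ≤ ‖p.1 - q.2‖ ^ 2 + ‖q.1 - p.2‖ ^ 2)
    (hcyc2 : ∀ p ∈ Γ, ∀ q ∈ Γ,
      |p.1.1 - p.2.1| ^ 2 + |q.1.1 - q.2.1| ^ 2 = |q.1.1 - p.2.1| ^ 2 + |p.1.1 - q.2.1| ^ 2 →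
      |p.1.2 - p.2.2| ^ 2 + |q.1.2 - q.2.2| ^ 2 ≤ |p.1.2 - q.2.2| ^ 2 + |q.1.2 - p.2.2| ^ 2)
    (hcyc3 : ∀ p ∈ Γ, ∀ q ∈ Γ,
      |p.1.2 - p.2.2| ^ 2 + |q.1.2 - q.2.2| ^ 2 = |q.1.2 - p.2.2| ^ 2 + |p.1.2 - q.2.2| ^ 2 →
      |p.1.1 - p.2.1| ^ 2 + |q.1.1 - q.2.1| ^ 2 ≤ |p.1.1 - q.2.1| ^ 2 + |q.1.1 - p.2.1| ^ 2)
    (T : ℝ × ℝ → ℝ × ℝ)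
    (F : Set (ℝ × ℝ)) (hF : F = {z : ℝ × ℝ | (z, T z) ∈ Γ}) :
    (∀ x y1 y2 : ℝ, (x, y1) ∈ F → (x, y2) ∈ F → y1 ≠ y2 →
      (T (x, y1)).1 = (T (x, y2)).1 →
      ((T (x, y1)).2 - (T (x, y2)).2) / (y1 - y2) ≥ 0) ∧
    (∀ x1 x2 y : ℝ, (x1, y) ∈ F → (x2, y) ∈ F → x1 ≠ x2 →
      (T (x1, y)).2 = (T (x2, y)).2 →
      ((T (x1, y)).1 - (T (x2, y)).1) / (x1 - x2) ≥ 0) := by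
  subst hF
  have key : ∀ a b : ℝ, 0 ≤ a * b → a / b ≥ 0 := by
    intro a b h
    have h2 : a / b = a * b / (b * b) := by
      by_cases hb : b = 0
      · simp [hb]
      · field_simp
    rw [h2]
    exact div_nonneg h (mul_self_nonneg b)
  constructor
  · intro x y1 y2 h1 h2 _ hT
    have h := hcyc2 _ h1 _ h2 (by simp only [hT])
    simp only [sq_abs] at h
    apply key
    nlinarith
  · intro x1 x2 y h1 h2 _ hT
    have h := hcyc3 _ h1 _ h2 (by simp only [hT])
    simp only [sq_abs] at h
    apply key
    nlinarith

end
end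

section
/- Let μ0 = ρ0·L2 and μ1 = ρ1·L2 be Borel probability measures on ℝ² with finite second moment, absolutely continuous with respect to the Lebesgue measure L2 with densities ρ0, ρ1. Let f : ℝ² → ℝ² be a Borel map with f_♯ μ0 = μ1 which is injective outside a set of L2-measure zero. Suppose the first component of f satisfies f1(x,y) = g(x) for a monotone nondecreasing function g : ℝ → ℝ, and that for L1-almost every x ∈ ℝ the function y ↦ f2(x,y) is monotone nondecreasing. Then for μ0-almost every (x,y) one has ρ1(f(x,y)) · g'(x) · (∂f2/∂y)(x,y) = ρ0(x,y), where g'(x) is the derivative of g (which exists at a.e. x by monotonicity) and (∂f2/∂y)(x,y) is the derivative of y ↦ f2(x,y) (which for a.e. x exists at a.e. y by monotonicity). -/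
open MeasureTheory ENNReal
open scoped Classical

noncomputable section

/-- Finiteness of the second moment of a measure on ℝ². -/
def FiniteSecondMoment (μ : Measure (ℝ × ℝ)) : Prop :=
  ∫⁻ z, (‖z‖₊ : ℝ≥0∞) ^ 2 ∂μ < ⊤

section Helpers

open Filter Topology

/-- Derivative tested on rational increments only. -/
def RatD (h : ℝ → ℝ) (y d : ℝ) : Prop :=
  ∀ n : ℕ, ∃ m : ℕ, ∀ q : ℚ, |(q : ℝ)| < 1 / ((m : ℝ) + 1) →
    |h (y + q) - h y - (q : ℝ) * d| ≤ 1 / ((n : ℝ) + 1) * |(q : ℝ)|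

lemma RatD_of_hasDerivAt {h : ℝ → ℝ} {y d : ℝ} (H : HasDerivAt h d y) : RatD h y d := by
  intro n
  rw [hasDerivAt_iff_isLittleO_nhds_zero, Asymptotics.isLittleO_iff] at H
  have h1 := H (c := 1 / ((n : ℝ) + 1)) (by positivity)
  rw [Metric.eventually_nhds_iff] at h1
  obtain ⟨δ, hδ, h2⟩ := h1
  obtain ⟨m, hm⟩ := exists_nat_one_div_lt hδ
  refine ⟨m, fun q hq => ?_⟩
  have := h2 (y := (q : ℝ)) (by simpa only [dist_zero_right, Real.norm_eq_abs] using hq.trans hm)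
  simpa only [smul_eq_mul, Real.norm_eq_abs] using this

lemma hasDerivAt_of_RatD {h : ℝ → ℝ} (hh : Monotone h) {y d : ℝ} (H : RatD h y d) :
    HasDerivAt h d y := by
  rw [hasDerivAt_iff_isLittleO_nhds_zero, Asymptotics.isLittleO_iff]
  intro c hc
  obtain ⟨n, hn⟩ := exists_nat_one_div_lt hc
  obtain ⟨m, hm⟩ := H n
  rw [Metric.eventually_nhds_iff]
  refine ⟨1 / ((m : ℝ) + 1), by positivity, fun t ht => ?_⟩
  have ht' : |t| < 1 / ((m : ℝ) + 1) := by simpa using ht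
  suffices hs : |h (y + t) - h y - t * d| ≤ 1 / ((n : ℝ) + 1) * |t| by
    have : 1 / ((n : ℝ) + 1) * |t| ≤ c * |t| := by gcongr
    simpa using hs.trans this
  have hcont : ∀ u : ℕ → ℚ, Tendsto (fun k => (u k : ℝ)) atTop (𝓝 t) →
      ∀ᶠ k in atTop, |(u k : ℝ)| < 1 / ((m : ℝ) + 1) := fun u hu =>
    (hu.abs).eventually_lt_const ht'
  rw [abs_le]
  constructor
  · obtain ⟨u, -, hu1, hu2⟩ := Real.exists_seq_rat_strictMono_tendsto t
    have hl : Tendsto (fun k => (u k : ℝ) * d - 1 / ((n : ℝ) + 1) * |(u k : ℝ)|) atTop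
        (𝓝 (t * d - 1 / ((n : ℝ) + 1) * |t|)) :=
      (hu2.mul_const d).sub (hu2.abs.const_mul _)
    have := le_of_tendsto hl (b := h (y + t) - h y) (by
      filter_upwards [hcont u hu2] with k hk
      have h1 := (abs_le.1 (hm (u k) hk)).1
      have h2 : h (y + u k) ≤ h (y + t) := hh (by linarith [hu1 k])
      linarith)
    linarith
  · obtain ⟨u, -, hu1, hu2⟩ := Real.exists_seq_rat_strictAnti_tendsto t
    have hl : Tendsto (fun k => (u k : ℝ) * d + 1 / ((n : ℝ) + 1) * |(u k : ℝ)|) atTop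
        (𝓝 (t * d + 1 / ((n : ℝ) + 1) * |t|)) :=
      (hu2.mul_const d).add (hu2.abs.const_mul _)
    have := ge_of_tendsto hl (b := h (y + t) - h y) (by
      filter_upwards [hcont u hu2] with k hk
      have h1 := (abs_le.1 (hm (u k) hk)).2
      have h2 : h (y + t) ≤ h (y + u k) := hh (by linarith [hu1 k])
      linarith)
    linarith

/-- Measurable candidate for the partial derivative in the second variable. -/
def Dy (F : ℝ × ℝ → ℝ) (z : ℝ × ℝ) : ℝ :=
  limsup (fun n : ℕ => ((n : ℝ) + 1) * (F (z.1, z.2 + 1 / ((n : ℝ) + 1)) - F (z.1, z.2))) atTop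

lemma measurable_Dy {F : ℝ × ℝ → ℝ} (hF : Measurable F) : Measurable (Dy F) := by
  unfold Dy
  refine Measurable.limsup fun n => ?_
  fun_prop

lemma Dy_eq {F : ℝ × ℝ → ℝ} {x y d : ℝ} (H : HasDerivAt (fun y => F (x, y)) d y) :
    Dy F (x, y) = d := by
  refine Tendsto.limsup_eq ?_
  have h1 := H.tendsto_slope_zero_right
  have h2 : Tendsto (fun n : ℕ => 1 / ((n : ℝ) + 1)) atTop (𝓝[>] 0) := by
    rw [tendsto_nhdsWithin_iff]
    exact ⟨tendsto_one_div_add_atTop_nhds_zero_nat, .of_forall fun n => by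
      simp only [Set.mem_Ioi]; positivity⟩
  refine (h1.comp h2).congr fun n => ?_
  simp

lemma measurableSet_RatD {F : ℝ × ℝ → ℝ} (hF : Measurable F) :
    MeasurableSet {z : ℝ × ℝ | RatD (fun y => F (z.1, y)) z.2 (Dy F z)} := by
  have hD := measurable_Dy hF
  unfold RatD
  simp only [Set.ofPred_forall, Set.ofPred_exists]
  refine .iInter fun n => .iUnion fun m => .iInter fun q => .iInter fun _ => ?_
  refine measurableSet_le ?_ measurable_const
  fun_prop

/-- Change of variables for triangular maps. -/
lemma triangular_cov {f : ℝ × ℝ → ℝ × ℝ} (hfmeas : Measurable f) {g : ℝ → ℝ} (hg : Monotone g)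
    (hf1 : ∀ x y : ℝ, (f (x, y)).1 = g x) {P : Set ℝ} (hP : MeasurableSet P)
    (hPd : ∀ x ∈ P, HasDerivAt g (deriv g x) x) (hPinj : Set.InjOn g P)
    (hPm : ∀ x ∈ P, Monotone fun y => (f (x, y)).2)
    {D : ℝ × ℝ → ℝ} (hD : Measurable D)
    {E : Set (ℝ × ℝ)} (hE : MeasurableSet E) (hEP : ∀ z ∈ E, z.1 ∈ P)
    (hED : ∀ x y, (x, y) ∈ E → HasDerivAt (fun y => (f (x, y)).2) (D (x, y)) y)
    (hfinj : Set.InjOn f E) {φ : ℝ × ℝ → ℝ≥0∞} (hφ : Measurable φ) :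
    ∫⁻ w in f '' E, φ w =
      ∫⁻ z in E, ENNReal.ofReal (deriv g z.1) * (ENNReal.ofReal (D z) * φ (f z)) := by
  have hfE : MeasurableSet (f '' E) := hE.image_of_measurable_injOn hfmeas hfinj
  have hdg : Measurable (deriv g) := measurable_deriv g
  have hfe : ∀ x y, f (x, y) = (g x, (f (x, y)).2) := fun x y => Prod.ext (hf1 x y) rfl
  rw [← lintegral_indicator hfE, ← lintegral_indicator hE]
  rw [Measure.volume_eq_prod, lintegral_prod _ (hφ.indicator hfE).aemeasurable,
    lintegral_prod _ ((by fun_prop : Measurable fun z : ℝ × ℝ =>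
      ENNReal.ofReal (deriv g z.1) * (ENNReal.ofReal (D z) * φ (f z))).indicator hE).aemeasurable]
  set K : ℝ → ℝ≥0∞ := fun u => ∫⁻ v, (f '' E).indicator φ (u, v) with hK
  have hK0 : ∀ u, u ∉ g '' P → K u = 0 := by
    intro u hu
    have : ∀ v, (f '' E).indicator φ (u, v) = 0 := by
      intro v
      refine Set.indicator_of_notMem ?_ _
      rintro ⟨⟨x, y⟩, hz, he⟩
      exact hu ⟨x, hEP _ hz, by rw [← hf1 x y, he]⟩
    simp [hK, this]
  have hgP : MeasurableSet (g '' P) := hP.image_of_measurable_injOn hg.measurable hPinj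
  have e1 : ∫⁻ u, K u = ∫⁻ u in g '' P, K u := by
    rw [← lintegral_indicator hgP]
    congr 1
    ext u
    by_cases hu : u ∈ g '' P
    · simp [Set.indicator_of_mem hu]
    · rw [Set.indicator_of_notMem hu, hK0 u hu]
  change ∫⁻ u, K u = _
  rw [e1, lintegral_image_eq_lintegral_deriv_mul_of_monotoneOn hP
    (fun x hx => (hPd x hx).hasDerivWithinAt) (hg.monotoneOn P), ← lintegral_indicator hP]
  congr 1
  ext x
  by_cases hx : x ∈ P
  swap
  · rw [Set.indicator_of_notMem hx]
    have : ∀ y, (x, y) ∉ E := fun y h => hx (hEP _ h)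
    simp [this]
  rw [Set.indicator_of_mem hx]
  set Ex : Set ℝ := {y | (x, y) ∈ E} with hEx
  have hExm : MeasurableSet Ex := measurable_prodMk_left hE
  set h : ℝ → ℝ := fun y => (f (x, y)).2 with hh
  have hhm : Measurable h := by fun_prop
  have hhinj : Set.InjOn h Ex := by
    intro a ha b hb hab
    have : f (x, a) = f (x, b) := by rw [hfe x a, hfe x b]; exact Prod.ext rfl hab
    exact (Prod.ext_iff.1 (hfinj ha hb this)).2
  have him : MeasurableSet (h '' Ex) := hExm.image_of_measurable_injOn hhm hhinj
  have e2 : K (g x) = ∫⁻ v in h '' Ex, φ (g x, v) := by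
    rw [← lintegral_indicator him]
    simp only [hK]
    congr 1
    ext v
    have : (g x, v) ∈ f '' E ↔ v ∈ h '' Ex := by
      constructor
      · rintro ⟨⟨x', y⟩, hz, he⟩
        have hx' : x' = x := hPinj (hEP _ hz) hx (by rw [← hf1 x' y, he])
        subst hx'
        exact ⟨y, hz, by simp only [hh, he]⟩
      · rintro ⟨y, hy, rfl⟩
        exact ⟨(x, y), hy, hfe x y⟩
    by_cases hv : v ∈ h '' Ex
    · rw [Set.indicator_of_mem hv, Set.indicator_of_mem (this.2 hv)]
    · rw [Set.indicator_of_notMem hv, Set.indicator_of_notMem (fun hh => hv (this.1 hh))]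
  rw [e2, lintegral_image_eq_lintegral_deriv_mul_of_monotoneOn hExm (f' := fun y => D (x, y))
    (fun y hy => (hED x y hy).hasDerivWithinAt) ((hPm x hx).monotoneOn Ex),
    ← lintegral_const_mul _ (by fun_prop), ← lintegral_indicator hExm]
  congr 1
  ext y
  by_cases hy : (x, y) ∈ E
  · rw [Set.indicator_of_mem hy, Set.indicator_of_mem (show y ∈ Ex from hy)]
    simp only [← hfe x y]
  · rw [Set.indicator_of_notMem hy, Set.indicator_of_notMem (show y ∉ Ex from hy)]

lemma inj_of_deriv_pos {g : ℝ → ℝ} (hg : Monotone g) :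
    Set.InjOn g {x | 0 < deriv g x} := by
  have key : ∀ a b, 0 < deriv g a → a < b → g a ≠ g b := by
    intro a b ha hab he
    have hd : HasDerivAt g (deriv g a) a :=
      (differentiableAt_of_deriv_ne_zero ha.ne').hasDerivAt
    have h1 : HasDerivWithinAt g (deriv g a) (Set.Icc a b) a := hd.hasDerivWithinAt
    have h2 : HasDerivWithinAt g 0 (Set.Icc a b) a := by
      refine (hasDerivWithinAt_const a _ (g a)).congr (fun t ht => ?_) rfl
      exact le_antisymm (by rw [he]; exact hg ht.2) (hg ht.1)
    have := (uniqueDiffOn_Icc hab a ⟨le_rfl, hab.le⟩).eq_deriv _ h1 h2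
    linarith
  have key' : ∀ a b, 0 < deriv g b → a < b → g a ≠ g b := by
    intro a b ha hab he
    have hd : HasDerivAt g (deriv g b) b :=
      (differentiableAt_of_deriv_ne_zero ha.ne').hasDerivAt
    have h1 : HasDerivWithinAt g (deriv g b) (Set.Icc a b) b := hd.hasDerivWithinAt
    have h2 : HasDerivWithinAt g 0 (Set.Icc a b) b := by
      refine (hasDerivWithinAt_const b _ (g b)).congr (fun t ht => ?_) rfl
      exact le_antisymm (hg ht.2) (by rw [← he]; exact hg ht.1)
    have := (uniqueDiffOn_Icc hab b ⟨hab.le, le_rfl⟩).eq_deriv _ h1 h2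
    linarith
  intro a ha b hb he
  rcases lt_trichotomy a b with h | h | h
  · exact absurd he (key a b ha h)
  · exact h
  · exact absurd he.symm (key b a hb h)

end Helpers

/-- Proposition 2.1: Jacobian equation for an essentially injective transport map whose first
component depends only on x and is nondecreasing, and whose second component is nondecreasing
in y for a.e. x. -/
theorem jacobian_equation
    (ρ0 ρ1 : ℝ × ℝ → ℝ) (hρ0meas : Measurable ρ0) (hρ1meas : Measurable ρ1)
    (hρ0nn : ∀ z, 0 ≤ ρ0 z) (hρ1nn : ∀ z, 0 ≤ ρ1 z)
    (μ0 μ1 : Measure (ℝ × ℝ))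
    (hμ0 : μ0 = volume.withDensity (fun z => ENNReal.ofReal (ρ0 z)))
    (hμ1 : μ1 = volume.withDensity (fun z => ENNReal.ofReal (ρ1 z)))
    (hp0 : IsProbabilityMeasure μ0) (hp1 : IsProbabilityMeasure μ1)
    (hm0 : FiniteSecondMoment μ0) (hm1 : FiniteSecondMoment μ1)
    (f : ℝ × ℝ → ℝ × ℝ) (hfmeas : Measurable f)
    (hpush : μ0.map f = μ1)
    (hinj : ∃ Z : Set (ℝ × ℝ), volume Z = 0 ∧ Set.InjOn f Zᶜ)
    (g : ℝ → ℝ) (hg : Monotone g)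
    (hf1 : ∀ x y : ℝ, (f (x, y)).1 = g x)
    (hf2 : ∀ᵐ x : ℝ ∂volume, Monotone fun y => (f (x, y)).2) :
    ∀ᵐ z ∂μ0,
      ρ1 (f z) * deriv g z.1 * deriv (fun y => (f (z.1, y)).2) z.2 = ρ0 z := by
  obtain ⟨Z, hZ0, hZinj⟩ := hinj
  obtain ⟨Z', hZZ', hZ'm, hZ'0⟩ := exists_measurable_superset_of_null hZ0
  have hgood : ∀ᵐ x : ℝ, (Monotone fun y => (f (x, y)).2) ∧ DifferentiableAt ℝ g x :=
    hf2.and hg.ae_differentiableAt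
  obtain ⟨N, hNsub, hNm, hN0⟩ := exists_measurable_superset_of_null (ae_iff.1 hgood)
  have hX : ∀ x, x ∉ N → (Monotone fun y => (f (x, y)).2) ∧ DifferentiableAt ℝ g x := by
    intro x hx
    by_contra hc
    exact hx (hNsub hc)
  have hdg : Measurable (deriv g) := measurable_deriv g
  have hdg0 : ∀ x, 0 ≤ deriv g x := fun x => hg.deriv_nonneg
  set P : Set ℝ := Nᶜ ∩ {x | 0 < deriv g x} with hPdef
  have hPm : MeasurableSet P := hNm.compl.inter (measurableSet_lt measurable_const hdg)
  set F : ℝ × ℝ → ℝ := fun z => (f z).2 with hFdef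
  have hF : Measurable F := by fun_prop
  set S : Set (ℝ × ℝ) := {z | RatD (fun y => F (z.1, y)) z.2 (Dy F z)} with hSdef
  have hSm : MeasurableSet S := measurableSet_RatD hF
  set G : Set (ℝ × ℝ) := (Prod.fst ⁻¹' P) ∩ S ∩ Z'ᶜ with hGdef
  have hGm : MeasurableSet G := ((measurable_fst hPm).inter hSm).inter hZ'm.compl
  have hD := measurable_Dy hF
  have hGd : ∀ x y, (x, y) ∈ G → HasDerivAt (fun y => (f (x, y)).2) (Dy F (x, y)) y := by
    rintro x y ⟨⟨h1, h2⟩, h3⟩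
    exact hasDerivAt_of_RatD (hX x h1.1).1 h2
  have hGinj : Set.InjOn f G := hZinj.mono fun z hz hzZ => hz.2 (hZZ' hzZ)
  have hac0 : μ0 ≪ volume := hμ0 ▸ withDensity_absolutelyContinuous _ _
  have hac1 : μ1 ≪ volume := hμ1 ▸ withDensity_absolutelyContinuous _ _
  -- the complement of `G` is negligible
  have hnull1 : ∀ᵐ z ∂μ0, z.1 ∉ N := by
    refine hac0.ae_le ?_
    rw [Measure.volume_eq_prod]
    exact Measure.quasiMeasurePreserving_fst.ae (measure_eq_zero_iff_ae_notMem.1 hN0)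
  have hnull2 : ∀ᵐ z ∂μ0, z ∉ Z' := hac0.ae_le (measure_eq_zero_iff_ae_notMem.1 hZ'0)
  have hnull3 : ∀ᵐ z ∂μ0, z ∈ S := by
    refine hac0.ae_le ?_
    change ∀ᵐ z : ℝ × ℝ, z ∈ S
    rw [ae_iff, Measure.volume_eq_prod]
    refine Measure.measure_prod_null_of_ae_null hSm.compl ?_
    filter_upwards [hf2] with x hx
    have := ae_iff.1 hx.ae_differentiableAt
    refine measure_mono_null ?_ this
    intro y hy hdy
    refine hy ?_
    have hd := hdy.hasDerivAt
    have he : Dy F (x, y) = _ := Dy_eq (F := F) hd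
    change RatD (fun y => F (x, y)) y (Dy F (x, y))
    rw [he]
    exact RatD_of_hasDerivAt hd
  have hnull4 : ∀ᵐ z ∂μ0, z.1 ∈ N ∨ 0 < deriv g z.1 := by
    set Q : Set ℝ := Nᶜ ∩ {x | deriv g x = 0} with hQ
    have hQm : MeasurableSet Q := hNm.compl.inter (hdg (measurableSet_singleton 0))
    have hgQ : volume (g '' Q) = 0 := by
      have := lintegral_image_eq_lintegral_deriv_mul_of_monotoneOn hQm
        (fun x hx => (hX x hx.1).2.hasDerivAt.hasDerivWithinAt) (hg.monotoneOn Q) (fun _ => 1)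
      rw [setLIntegral_one] at this
      rw [this, setLIntegral_congr_fun (g := fun _ => 0) hQm]
      · simp
      · intro x hx
        have : deriv g x = 0 := hx.2
        simp [this]
    obtain ⟨T, hQT, hTm, hT0⟩ := exists_measurable_superset_of_null hgQ
    have h1 : ∀ᵐ w ∂μ1, w.1 ∉ T := by
      refine hac1.ae_le ?_
      rw [Measure.volume_eq_prod]
      exact Measure.quasiMeasurePreserving_fst.ae (measure_eq_zero_iff_ae_notMem.1 hT0)
    rw [← hpush] at h1
    have h2 := ae_of_ae_map hfmeas.aemeasurable h1
    filter_upwards [h2] with z hz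
    by_contra! hc
    refine hz (hQT ?_)
    refine ⟨z.1, ⟨hc.1, le_antisymm hc.2 (hdg0 _)⟩, ?_⟩
    exact (hf1 z.1 z.2).symm
  have hGae : ∀ᵐ z ∂μ0, z ∈ G := by
    filter_upwards [hnull1, hnull2, hnull3, hnull4] with z h1 h2 h3 h4
    exact ⟨⟨⟨h1, h4.resolve_left h1⟩, h3⟩, h2⟩
  -- the identity of densities on `G`
  set J : ℝ × ℝ → ℝ≥0∞ := fun z => ENNReal.ofReal (deriv g z.1) *
    (ENNReal.ofReal (Dy F z) * ENNReal.ofReal (ρ1 (f z))) with hJdef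
  have hJm : Measurable J := by fun_prop
  have hkey : ∀ E, MeasurableSet E → E ⊆ G →
      ∫⁻ z in E, ENNReal.ofReal (ρ0 z) = ∫⁻ z in E, J z := by
    intro E hE hEG
    have hfE : MeasurableSet (f '' E) :=
      hE.image_of_measurable_injOn hfmeas (hGinj.mono hEG)
    have h1 := triangular_cov hfmeas hg hf1 hPm
      (fun x hx => (hX x hx.1).2.hasDerivAt)
      ((inj_of_deriv_pos hg).mono Set.inter_subset_right)
      (fun x hx => (hX x hx.1).1) hD hE (fun z hz => (hEG hz).1.1)
      (fun x y hz => hGd x y (hEG hz)) (hGinj.mono hEG)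
      (φ := fun w => ENNReal.ofReal (ρ1 w)) (by fun_prop)
    rw [← withDensity_apply _ hfE, ← hμ1, ← hpush, Measure.map_apply hfmeas hfE] at h1
    rw [← withDensity_apply _ hE, ← hμ0]
    refine Eq.trans ?_ h1
    refine measure_congr ?_
    filter_upwards [hGae] with z hz
    refine propext ⟨fun h => ⟨z, h, rfl⟩, ?_⟩
    rintro ⟨z', hz', he⟩
    rw [hGinj (hEG hz') hz he] at hz'
    exact hz'
  have hfin : ∫⁻ z in G, ENNReal.ofReal (ρ0 z) ≠ ∞ := by
    rw [← withDensity_apply _ hGm, ← hμ0]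
    exact measure_ne_top _ _
  have hae : (fun z => ENNReal.ofReal (ρ0 z)) =ᵐ[volume.restrict G] J := by
    refine AEMeasurable.ae_eq_of_forall_setLIntegral_eq (by fun_prop) hJm.aemeasurable hfin
      (by rwa [← hkey G hGm subset_rfl]) fun s hs _ => ?_
    rw [Measure.restrict_restrict hs]
    exact hkey _ (hs.inter hGm) Set.inter_subset_right
  rw [Filter.EventuallyEq, ae_restrict_iff' hGm] at hae
  filter_upwards [hGae, hac0.ae_le hae] with z hz hz2
  have hz3 := hz2 hz
  have hd : HasDerivAt (fun y => (f (z.1, y)).2) (Dy F z) z.2 := hGd z.1 z.2 hz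
  have hmono := (hX z.1 hz.1.1.1).1
  have hDnn : 0 ≤ Dy F z := by rw [← hd.deriv]; exact hmono.deriv_nonneg
  rw [hd.deriv]
  simp only [hJdef] at hz3
  rw [← ENNReal.ofReal_mul hDnn, ← ENNReal.ofReal_mul (hdg0 _),
    ENNReal.ofReal_eq_ofReal_iff (hρ0nn z)
      (mul_nonneg (hdg0 _) (mul_nonneg hDnn (hρ1nn _)))] at hz3
  rw [hz3]
  ring

end
end

section
/- Fix x_c, y_c ∈ ℝ and set S(x) = y_c + √(1 − (x − x_c)²). Let a < b and c ∈ ℝ and E = {(x,y) ∈ ℝ² : a ≤ x ≤ b, S(x) ≤ y ≤ c}, and assume |x − x_c| < (1/2)(y − y_c) for all (x,y) ∈ E (with E nonempty above every x ∈ [a,b]). Then for all x1, x2 ∈ [a,b]: S((x1 + x2)/2) − (S(x1) + S(x2))/2 ≤ |x1 − x2|²/2. -/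
open MeasureTheory ENNReal
open scoped Classical

noncomputable section

/-- The unit circle arc (centered at (x_c, y_c)) bounding the domain E from below. -/
def Sc (xc yc x : ℝ) : ℝ := yc + Real.sqrt (1 - (x - xc) ^ 2)

/-- Inequality (3.2): concavity defect estimate for the circular arc S on the base of E. -/
theorem arc_midpoint_estimate
    (xc yc a b c : ℝ) (hab : a < b)
    (E : Set (ℝ × ℝ))
    (hE : E = {p : ℝ × ℝ | a ≤ p.1 ∧ p.1 ≤ b ∧ Sc xc yc p.1 ≤ p.2 ∧ p.2 ≤ c})
    (hgeom : ∀ p ∈ E, |p.1 - xc| < (1/2) * (p.2 - yc))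
    (hne : ∀ x ∈ Set.Icc a b, Sc xc yc x ≤ c) :
    ∀ x1 ∈ Set.Icc a b, ∀ x2 ∈ Set.Icc a b,
      Sc xc yc ((x1 + x2) / 2) - (Sc xc yc x1 + Sc xc yc x2) / 2 ≤ |x1 - x2| ^ 2 / 2 := by
  intro x1 h1 x2 h2
  have key : ∀ x ∈ Set.Icc a b, |x - xc| < (1/2) * Real.sqrt (1 - (x - xc) ^ 2) := by
    intro x hx
    have h := hgeom (x, Sc xc yc x) (by rw [hE]; exact ⟨hx.1, hx.2, le_refl _, hne x hx⟩)
    simpa [Sc] using h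
  have bd : ∀ x ∈ Set.Icc a b, (x - xc) ^ 2 ≤ 1 / 5 ∧ 4 / 5 ≤ Real.sqrt (1 - (x - xc) ^ 2) ∧
      Real.sqrt (1 - (x - xc) ^ 2) ^ 2 = 1 - (x - xc) ^ 2 := by
    intro x hx
    have h := key x hx
    have hpos : 0 < Real.sqrt (1 - (x - xc) ^ 2) := by
      have := abs_nonneg (x - xc)
      linarith
    have hsq := Real.sq_sqrt (Real.sqrt_pos.1 hpos).le
    have h5 : (x - xc) ^ 2 ≤ 1 / 5 := by
      have h3 := pow_le_pow_left₀ (abs_nonneg (x - xc)) h.le 2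
      rw [sq_abs, mul_pow, hsq] at h3
      linarith
    refine ⟨h5, ?_, hsq⟩
    apply Real.le_sqrt_of_sq_le
    linarith
  have hm : (x1 + x2) / 2 ∈ Set.Icc a b :=
    ⟨by linarith [h1.1, h2.1], by linarith [h1.2, h2.2]⟩
  obtain ⟨_, p1, p2⟩ := bd x1 h1
  obtain ⟨_, q1, q2⟩ := bd x2 h2
  obtain ⟨m0, s1, s2⟩ := bd _ hm
  rw [sq_abs]
  unfold Sc
  generalize Real.sqrt (1 - (x1 - xc) ^ 2) = p at *
  generalize Real.sqrt (1 - (x2 - xc) ^ 2) = q at *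
  generalize Real.sqrt (1 - ((x1 + x2) / 2 - xc) ^ 2) = s at *
  have e1 : (2 * s - p - q) * (2 * s + p + q) = (p - q) ^ 2 + (x1 - x2) ^ 2 := by
    linear_combination 4 * s2 - 2 * p2 - 2 * q2
  have e2 : (p - q) ^ 2 * (p + q) ^ 2 = 4 * ((x1 + x2) / 2 - xc) ^ 2 * (x1 - x2) ^ 2 := by
    have : (p - q) * (p + q) = - (2 * ((x1 + x2) / 2 - xc) * (x1 - x2)) := by
      linear_combination p2 - q2
    rw [← mul_pow, this]; ring
  have e3 : (p - q) ^ 2 * (64 / 25) ≤ 4 / 5 * (x1 - x2) ^ 2 := by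
    have i1 : (64 / 25 : ℝ) ≤ (p + q) ^ 2 := by nlinarith
    have i2 := mul_le_mul_of_nonneg_left i1 (sq_nonneg (p - q))
    have i3 := mul_le_mul_of_nonneg_right m0 (sq_nonneg (x1 - x2))
    linarith
  have hD := sq_nonneg (x1 - x2)
  by_contra! hcon
  have j1 : (x1 - x2) ^ 2 < 2 * s - p - q := by linarith
  have j2 : (2 * s - p - q) * (16 / 5) ≤ (2 * s - p - q) * (2 * s + p + q) :=
    mul_le_mul_of_nonneg_left (by linarith) (by linarith)
  linarith

end
end

section
/- Let K ∈ ℝ and h, l > 0 with l > 2h. Let X ⊆ ℝ² be a Borel set containing the squares A0 = [0,h] × [0,h] and A1 = [l, l+h] × [0,h], and suppose L2(X ∩ ([l/2, l/2 + h] × ℝ)) < e^{K l²/8} · h². Let μ0 and μ1 be the normalized restrictions of L2 to A0 and A1 respectively. Then W2(μ0, μ1) = l, and there exists NO Borel probability measure μ supported in X such that W2(μ0, μ) = W2(μ, μ1) = l/2 and Ent_∞(μ) ≤ (1/2)·Ent_∞(μ0) + (1/2)·Ent_∞(μ1) − (K/8)·l², where Ent_∞ is taken with respect to L2 restricted to X.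 (Consequently (X, ‖·‖∞, L2|X) fails the CD(K,∞) condition.) -/
open MeasureTheory ENNReal
open scoped Classical

noncomputable section

/-- The quadratic Wasserstein distance W₂ w.r.t. the sup-norm distance on ℝ². -/
def W2 (μ ν : Measure (ℝ × ℝ)) : ℝ≥0∞ :=
  (⨅ γ ∈ Couplings μ ν, costSup γ) ^ (1/2 : ℝ)

/-- The Boltzmann entropy Ent_∞(μ) = ∫ ρ log ρ dm ∈ [-∞,∞] when μ = ρ·m is absolutely
continuous w.r.t. m (the integral taken as difference of the lower integrals of the
positive and negative parts), and +∞ otherwise. -/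
def EntInf (m μ : Measure (ℝ × ℝ)) : EReal :=
  if μ ≪ m then
    ((∫⁻ z, ENNReal.ofReal ((μ.rnDeriv m z).toReal * Real.log (μ.rnDeriv m z).toReal) ∂m : ℝ≥0∞) : EReal)
      - ((∫⁻ z, ENNReal.ofReal (-((μ.rnDeriv m z).toReal * Real.log (μ.rnDeriv m z).toReal)) ∂m : ℝ≥0∞) : EReal)
  else ⊤

lemma ent_square (X A : Set (ℝ × ℝ)) (hA : MeasurableSet A) (hAX : A ⊆ X)
    (v : ℝ) (hv : 0 < v) (hvol : volume A = ENNReal.ofReal v) :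
    EntInf (volume.restrict X) ((volume A)⁻¹ • volume.restrict A) = ((-Real.log v : ℝ) : EReal) := by
  have hrep : (volume A)⁻¹ • volume.restrict A
      = (volume.restrict X).withDensity (A.indicator fun _ => ENNReal.ofReal v⁻¹) := by
    rw [withDensity_indicator hA, Measure.restrict_restrict hA, Set.inter_eq_left.mpr hAX,
      withDensity_const, hvol, ENNReal.ofReal_inv_of_pos hv]
  have hmeas : Measurable (A.indicator fun _ : ℝ × ℝ => ENNReal.ofReal v⁻¹) :=
    measurable_const.indicator hA
  rw [hrep]
  unfold EntInf
  rw [if_pos (withDensity_absolutelyContinuous _ _)]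
  have hae := Measure.rnDeriv_withDensity (volume.restrict X) hmeas
  have hA' : (volume.restrict X) A = ENNReal.ofReal v := by
    rw [Measure.restrict_apply hA, Set.inter_eq_left.mpr hAX, hvol]
  have hvi : 0 ≤ v⁻¹ := (inv_pos.mpr hv).le
  have h1 : ∫⁻ z, ENNReal.ofReal ((((volume.restrict X).withDensity (A.indicator fun _ => ENNReal.ofReal v⁻¹)).rnDeriv (volume.restrict X) z).toReal * Real.log (((volume.restrict X).withDensity (A.indicator fun _ => ENNReal.ofReal v⁻¹)).rnDeriv (volume.restrict X) z).toReal) ∂(volume.restrict X)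
      = ENNReal.ofReal (v⁻¹ * Real.log v⁻¹) * ENNReal.ofReal v := by
    rw [← hA', ← lintegral_indicator_const hA]
    refine lintegral_congr_ae ?_
    filter_upwards [hae] with z hz
    rw [hz]
    by_cases hzA : z ∈ A
    · simp [hzA, ENNReal.toReal_ofReal hvi, -ENNReal.ofReal_inv_of_pos, -Real.log_inv]
    · simp [hzA]
  have h2 : ∫⁻ z, ENNReal.ofReal (-((((volume.restrict X).withDensity (A.indicator fun _ => ENNReal.ofReal v⁻¹)).rnDeriv (volume.restrict X) z).toReal * Real.log (((volume.restrict X).withDensity (A.indicator fun _ => ENNReal.ofReal v⁻¹)).rnDeriv (volume.restrict X) z).toReal)) ∂(volume.restrict X)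
      = ENNReal.ofReal (-(v⁻¹ * Real.log v⁻¹)) * ENNReal.ofReal v := by
    rw [← hA', ← lintegral_indicator_const hA]
    refine lintegral_congr_ae ?_
    filter_upwards [hae] with z hz
    rw [hz]
    by_cases hzA : z ∈ A
    · simp [hzA, ENNReal.toReal_ofReal hvi, -ENNReal.ofReal_inv_of_pos, -Real.log_inv]
    · simp [hzA]
  rw [h1, h2, ← ENNReal.ofReal_mul' hv.le, ← ENNReal.ofReal_mul' hv.le]
  have e : v⁻¹ * Real.log v⁻¹ * v = -Real.log v := by
    rw [Real.log_inv]; field_simp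
  rw [neg_mul, e, neg_neg, EReal.coe_ennreal_ofReal, EReal.coe_ennreal_ofReal, ← EReal.coe_sub]
  congr 1
  rcases le_total 0 (Real.log v) with h | h
  · rw [max_eq_right (by linarith), max_eq_left h]; ring
  · rw [max_eq_left (by linarith), max_eq_right h]; ring

lemma tangent_xlogx (t c : ℝ) (ht : 0 ≤ t) (hc : 0 < c) :
    (1 + Real.log c) * t - c ≤ t * Real.log t := by
  rcases ht.eq_or_lt with rfl | ht
  · simp [hc.le]
  · have := Real.log_le_sub_one_of_pos (div_pos hc ht)
    rw [Real.log_div hc.ne' ht.ne'] at this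
    have h2 := mul_le_mul_of_nonneg_left this ht.le
    have : t * (c / t - 1) = c - t := by field_simp
    nlinarith

lemma ent_lower (M μ : Measure (ℝ × ℝ)) [SigmaFinite M] [IsProbabilityMeasure μ] (hac : μ ≪ M)
    (S : Set (ℝ × ℝ)) (hS : MeasurableSet S) (hμS : μ Sᶜ = 0)
    (v : ℝ) (hv : 0 < v) (hvol : M S = ENNReal.ofReal v) :
    ((-Real.log v : ℝ) : EReal) ≤ EntInf M μ := by
  unfold EntInf
  rw [if_pos hac]
  set ρ : ℝ × ℝ → ℝ := fun z => (μ.rnDeriv M z).toReal with hρ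
  have hρi : Integrable ρ M := Measure.integrable_toReal_rnDeriv
  have hρ1 : ∫ z, ρ z ∂M = 1 := by
    rw [Measure.integral_toReal_rnDeriv hac]; simp
  have hoff : ∀ᵐ z ∂M, z ∉ S → ρ z = 0 := by
    have : ∫⁻ z in Sᶜ, μ.rnDeriv M z ∂M = 0 := by
      rw [Measure.setLIntegral_rnDeriv hac, hμS]
    rw [lintegral_eq_zero_iff (Measure.measurable_rnDeriv _ _)] at this
    have := (ae_restrict_iff' hS.compl).mp this
    filter_upwards [this] with z hz hzS
    have := hz hzS
    simp at this
    simp [hρ, this]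
  set c := v⁻¹ with hc
  have hcpos : 0 < c := inv_pos.mpr hv
  set g : ℝ × ℝ → ℝ := fun z => (1 + Real.log c) * ρ z - S.indicator (fun _ => c) z with hg
  have hSi : Integrable (S.indicator (fun _ => c)) M := by
    rw [integrable_indicator_iff hS]
    exact integrableOn_const (by rw [hvol]; simp)
  have hgi : Integrable g M := (hρi.const_mul _).sub hSi
  have hgint : ∫ z, g z ∂M = -Real.log v := by
    rw [hg, integral_sub (hρi.const_mul _) hSi, integral_const_mul, hρ1, integral_indicator_const _ hS]
    simp [Measure.real, hvol, ENNReal.toReal_ofReal hv.le, hc, hv.ne']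
  have hgf : ∀ᵐ z ∂M, g z ≤ ρ z * Real.log (ρ z) := by
    filter_upwards [hoff] with z hz
    by_cases hzS : z ∈ S
    · simp only [hg, Set.indicator_of_mem hzS]
      exact tangent_xlogx _ _ ENNReal.toReal_nonneg hcpos
    · simp [hg, hzS, hz hzS]
  have hN : ∫⁻ z, ENNReal.ofReal (-(ρ z * Real.log (ρ z))) ∂M ≠ ⊤ := by
    refine ne_of_lt (lt_of_le_of_lt (lintegral_mono_ae ?_) hgi.neg.lintegral_lt_top)
    filter_upwards [hgf] with z hz
    exact ENNReal.ofReal_le_ofReal (by simpa using hz)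
  have hρm : Measurable ρ := (Measure.measurable_rnDeriv _ _).ennreal_toReal
  have hfm : Measurable (fun z => ρ z * Real.log (ρ z)) := hρm.mul hρm.log
  by_cases hP : ∫⁻ z, ENNReal.ofReal (ρ z * Real.log (ρ z)) ∂M = ⊤
  · change _ ≤ ((∫⁻ z, ENNReal.ofReal (ρ z * Real.log (ρ z)) ∂M : ℝ≥0∞) : EReal)
      - ((∫⁻ z, ENNReal.ofReal (-(ρ z * Real.log (ρ z))) ∂M : ℝ≥0∞) : EReal)
    rw [hP]
    lift (∫⁻ z, ENNReal.ofReal (-(ρ z * Real.log (ρ z))) ∂M) to NNReal using hN with n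
    have : ((n : ℝ≥0∞) : EReal) = ((n : ℝ) : EReal) := rfl
    rw [this, EReal.coe_ennreal_top, EReal.top_sub_coe]
    exact le_top
  · have hfi : Integrable (fun z => ρ z * Real.log (ρ z)) M := by
      refine ⟨hfm.aestronglyMeasurable, ?_⟩
      rw [hasFiniteIntegral_iff_enorm]
      have hle : ∀ z, ‖ρ z * Real.log (ρ z)‖ₑ ≤ ENNReal.ofReal (ρ z * Real.log (ρ z))
          + ENNReal.ofReal (-(ρ z * Real.log (ρ z))) := by
        intro z
        rw [Real.enorm_eq_ofReal_abs]
        rcases abs_choice (ρ z * Real.log (ρ z)) with h | h <;> rw [h] <;> simp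
      refine lt_of_le_of_lt (lintegral_mono hle) ?_
      rw [lintegral_add_left hfm.ennreal_ofReal]
      exact ENNReal.add_lt_top.mpr ⟨lt_top_iff_ne_top.mpr hP, lt_top_iff_ne_top.mpr hN⟩
    have h1 := integral_eq_lintegral_pos_part_sub_lintegral_neg_part hfi
    have h2 := integral_mono_ae hgi hfi hgf
    rw [hgint, h1] at h2
    change _ ≤ ((∫⁻ z, ENNReal.ofReal (ρ z * Real.log (ρ z)) ∂M : ℝ≥0∞) : EReal)
      - ((∫⁻ z, ENNReal.ofReal (-(ρ z * Real.log (ρ z))) ∂M : ℝ≥0∞) : EReal)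
    rw [← EReal.coe_ennreal_toReal hP, ← EReal.coe_ennreal_toReal hN, ← EReal.coe_sub]
    exact_mod_cast h2

lemma sq_cost (γ : Measure ((ℝ × ℝ) × (ℝ × ℝ))) (C : ℝ) (hC : 0 ≤ C)
    (hc : costSup γ ≤ ENNReal.ofReal C) :
    Integrable (fun p : (ℝ × ℝ) × (ℝ × ℝ) => (p.2.1 - p.1.1) ^ 2) γ ∧
      ∫ p, (p.2.1 - p.1.1) ^ 2 ∂γ ≤ C := by
  have hle : ∫⁻ p, ENNReal.ofReal ((p.2.1 - p.1.1) ^ 2) ∂γ ≤ ENNReal.ofReal C := by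
    refine le_trans (lintegral_mono fun p => ?_) hc
    rw [edist_dist, ← ENNReal.ofReal_pow dist_nonneg]
    refine ENNReal.ofReal_le_ofReal ?_
    rw [← sq_abs (p.2.1 - p.1.1)]
    refine pow_le_pow_left₀ (abs_nonneg _) ?_ 2
    rw [Prod.dist_eq, abs_sub_comm, ← Real.dist_eq]
    exact le_max_left _ _
  have hm : Measurable (fun p : (ℝ × ℝ) × (ℝ × ℝ) => (p.2.1 - p.1.1) ^ 2) := by fun_prop
  have hi : Integrable (fun p : (ℝ × ℝ) × (ℝ × ℝ) => (p.2.1 - p.1.1) ^ 2) γ := by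
    refine ⟨hm.aestronglyMeasurable, ?_⟩
    rw [hasFiniteIntegral_iff_ofReal (Filter.Eventually.of_forall fun p => sq_nonneg _)]
    exact lt_of_le_of_lt hle ENNReal.ofReal_lt_top
  refine ⟨hi, ?_⟩
  rw [integral_eq_lintegral_of_nonneg_ae (Filter.Eventually.of_forall fun p => sq_nonneg _)
    hm.aestronglyMeasurable]
  exact ENNReal.toReal_le_of_le_ofReal hC hle

lemma diff_integrable (γ : Measure ((ℝ × ℝ) × (ℝ × ℝ))) [IsProbabilityMeasure γ]
    (hi : Integrable (fun p : (ℝ × ℝ) × (ℝ × ℝ) => (p.2.1 - p.1.1) ^ 2) γ) :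
    Integrable (fun p : (ℝ × ℝ) × (ℝ × ℝ) => p.2.1 - p.1.1) γ := by
  refine Integrable.mono' (hi.add (integrable_const (1 : ℝ))) (by fun_prop) ?_
  refine Filter.Eventually.of_forall fun p => ?_
  simp only [Pi.add_apply, Real.norm_eq_abs]
  rw [← sq_abs]
  nlinarith [sq_nonneg (|p.2.1 - p.1.1| - 1)]

/-- Expansion of the centred second moment of the horizontal displacement. -/
lemma sq_expand (γ : Measure ((ℝ × ℝ) × (ℝ × ℝ))) [IsProbabilityMeasure γ] (μ ν : Measure (ℝ × ℝ))
    (h1 : γ.map Prod.fst = μ) (h2 : γ.map Prod.snd = ν)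
    (hi : Integrable (fun p : (ℝ × ℝ) × (ℝ × ℝ) => (p.2.1 - p.1.1) ^ 2) γ)
    (hμ : Integrable (fun z : ℝ × ℝ => z.1) μ) (hν : Integrable (fun z : ℝ × ℝ => z.1) ν) (a : ℝ) :
    Integrable (fun p : (ℝ × ℝ) × (ℝ × ℝ) => (p.2.1 - p.1.1 - a) ^ 2) γ ∧
    ∫ p, (p.2.1 - p.1.1 - a) ^ 2 ∂γ
      = ∫ p, (p.2.1 - p.1.1) ^ 2 ∂γ - 2 * a * (∫ z, z.1 ∂ν - ∫ z, z.1 ∂μ) + a ^ 2 := by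
  have hd := diff_integrable γ hi
  have e : (fun p : (ℝ × ℝ) × (ℝ × ℝ) => (p.2.1 - p.1.1 - a) ^ 2)
      = fun p => ((p.2.1 - p.1.1) ^ 2 - 2 * a * (p.2.1 - p.1.1)) + a ^ 2 := by
    funext p; ring
  have hi1 : Integrable (fun p : (ℝ × ℝ) × (ℝ × ℝ) => p.1.1) γ := by
    rw [← h1] at hμ
    exact hμ.comp_measurable measurable_fst
  have hi2 : Integrable (fun p : (ℝ × ℝ) × (ℝ × ℝ) => p.2.1) γ := by
    rw [← h2] at hν
    exact hν.comp_measurable measurable_snd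
  have I1 : ∫ z, z.1 ∂μ = ∫ p, p.1.1 ∂γ := by
    rw [← h1, integral_map measurable_fst.aemeasurable (by fun_prop)]
  have I2 : ∫ z, z.1 ∂ν = ∫ p, p.2.1 ∂γ := by
    rw [← h2, integral_map measurable_snd.aemeasurable (by fun_prop)]
  rw [e]
  have hs : Integrable (fun p : (ℝ × ℝ) × (ℝ × ℝ) =>
      (p.2.1 - p.1.1) ^ 2 - 2 * a * (p.2.1 - p.1.1)) γ := hi.sub (hd.const_mul (2 * a))
  refine ⟨hs.add (integrable_const _), ?_⟩
  rw [integral_add hs (integrable_const _), integral_sub hi (hd.const_mul (2 * a)),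
    integral_const_mul, integral_sub hi2 hi1, I1, I2]
  simp

lemma W2_near (μ ν : Measure (ℝ × ℝ)) (r : ℝ) (hr : 0 ≤ r) (h : W2 μ ν = ENNReal.ofReal r)
    (ε : ℝ) (hε : 0 < ε) : ∃ γ ∈ Couplings μ ν, costSup γ ≤ ENNReal.ofReal (r ^ 2 + ε) := by
  have hinf : (⨅ γ ∈ Couplings μ ν, costSup γ) = ENNReal.ofReal (r ^ 2) := by
    unfold W2 at h
    rw [ENNReal.ofReal_pow hr, ← h, ← ENNReal.rpow_natCast, ← ENNReal.rpow_mul]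
    norm_num
  have hlt : (⨅ γ ∈ Couplings μ ν, costSup γ) < ENNReal.ofReal (r ^ 2 + ε) := by
    rw [hinf]
    exact (ENNReal.ofReal_lt_ofReal_iff (by positivity)).mpr (by linarith)
  simp only [iInf_lt_iff] at hlt
  obtain ⟨γ, hγ, hlt⟩ := hlt
  exact ⟨γ, hγ, hlt.le⟩

lemma W2_eq_of (μ ν : Measure (ℝ × ℝ)) (r : ℝ) (hr : 0 ≤ r)
    (h1 : ∃ γ ∈ Couplings μ ν, costSup γ ≤ ENNReal.ofReal (r ^ 2))
    (h2 : ∀ γ ∈ Couplings μ ν, ENNReal.ofReal (r ^ 2) ≤ costSup γ) : W2 μ ν = ENNReal.ofReal r := by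
  have hinf : (⨅ γ ∈ Couplings μ ν, costSup γ) = ENNReal.ofReal (r ^ 2) := by
    refine le_antisymm ?_ (le_iInf₂ h2)
    obtain ⟨γ, hγ, hle⟩ := h1
    exact (iInf₂_le γ hγ).trans hle
  unfold W2
  rw [hinf, ENNReal.ofReal_pow hr, ← ENNReal.rpow_natCast, ← ENNReal.rpow_mul]
  norm_num

/-- A midpoint is concentrated in the vertical strip. -/
lemma midpoint_strip (h l : ℝ) (hl : 0 < l) (μ0 μ1 μ : Measure (ℝ × ℝ))
    [IsProbabilityMeasure μ]
    (hs : ∀ᵐ z ∂μ0, z.1 ∈ Set.Icc 0 h)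
    (hi0 : Integrable (fun z : ℝ × ℝ => z.1) μ0) (hi1 : Integrable (fun z : ℝ × ℝ => z.1) μ1)
    (hmean : ∫ z, z.1 ∂μ1 - ∫ z, z.1 ∂μ0 = l)
    (hW0 : W2 μ0 μ = ENNReal.ofReal (l / 2)) (hW1 : W2 μ μ1 = ENNReal.ofReal (l / 2)) :
    ∀ᵐ z ∂μ, z.1 ∈ Set.Icc (l / 2) (l / 2 + h) := by
  set φ : ℝ × ℝ → ℝ := fun z => (max 0 (max (l / 2 - z.1) (z.1 - (l / 2 + h)))) ^ 2 with hφ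
  have hφm : Measurable φ := by fun_prop
  have key : ∀ ε : ℝ, 0 < ε → ∫⁻ z, ENNReal.ofReal (φ z) ∂μ ≤ ENNReal.ofReal (2 * ε) := by
    intro ε hε
    obtain ⟨γ0, ⟨hp0, h00, h01⟩, hc0⟩ := W2_near _ _ _ (by positivity) hW0 ε hε
    obtain ⟨γ1, ⟨hp1, h10, h11⟩, hc1⟩ := W2_near _ _ _ (by positivity) hW1 ε hε
    obtain ⟨s0, b0⟩ := sq_cost γ0 _ (by positivity) hc0
    obtain ⟨s1, b1⟩ := sq_cost γ1 _ (by positivity) hc1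
    have him : Integrable (fun z : ℝ × ℝ => z.1) μ := by
      rw [← h01, integrable_map_measure (by fun_prop) measurable_snd.aemeasurable]
      have := hi0
      rw [← h00] at this
      have := (diff_integrable γ0 s0).add (this.comp_measurable measurable_fst)
      refine this.congr (Filter.Eventually.of_forall fun p => ?_)
      simp
    obtain ⟨t0, e0⟩ := sq_expand γ0 _ _ h00 h01 s0 hi0 him (l / 2)
    obtain ⟨t1, e1⟩ := sq_expand γ1 _ _ h10 h11 s1 him hi1 (l / 2)
    have hb : ∫ p, (p.2.1 - p.1.1 - l / 2) ^ 2 ∂γ0 ≤ 2 * ε := by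
      have : 0 ≤ ∫ p, (p.2.1 - p.1.1 - l / 2) ^ 2 ∂γ1 := integral_nonneg fun p => sq_nonneg _
      nlinarith
    have hs' : ∀ᵐ p ∂γ0, p.1.1 ∈ Set.Icc 0 h := by
      rw [← h00] at hs
      exact ae_of_ae_map measurable_fst.aemeasurable hs
    calc ∫⁻ z, ENNReal.ofReal (φ z) ∂μ = ∫⁻ p, ENNReal.ofReal (φ p.2) ∂γ0 := by
          rw [← h01, lintegral_map (by fun_prop) measurable_snd]
      _ ≤ ∫⁻ p, ENNReal.ofReal ((p.2.1 - p.1.1 - l / 2) ^ 2) ∂γ0 := by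
          refine lintegral_mono_ae ?_
          filter_upwards [hs'] with p hp
          refine ENNReal.ofReal_le_ofReal ?_
          rw [hφ, ← sq_abs (p.2.1 - p.1.1 - l / 2)]
          refine pow_le_pow_left₀ (le_max_left _ _) ?_ 2
          have a1 := le_abs_self (p.2.1 - p.1.1 - l / 2)
          have a2 := neg_le_abs (p.2.1 - p.1.1 - l / 2)
          have := hp.1
          have := hp.2
          refine max_le (abs_nonneg _) (max_le ?_ ?_) <;> linarith
      _ = ENNReal.ofReal (∫ p, (p.2.1 - p.1.1 - l / 2) ^ 2 ∂γ0) :=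
          (ofReal_integral_eq_lintegral_ofReal t0
            (Filter.Eventually.of_forall fun p => sq_nonneg _)).symm
      _ ≤ _ := ENNReal.ofReal_le_ofReal hb
  have hz : ∫⁻ z, ENNReal.ofReal (φ z) ∂μ = 0 := by
    by_contra hne
    have hlt : ∫⁻ z, ENNReal.ofReal (φ z) ∂μ ≠ ⊤ :=
      ne_of_lt (lt_of_le_of_lt (key 1 one_pos) ENNReal.ofReal_lt_top)
    have hpos := ENNReal.toReal_pos hne hlt
    have := ENNReal.toReal_le_of_le_ofReal (by positivity) (key _ (by positivity : 0 < (∫⁻ z, ENNReal.ofReal (φ z) ∂μ).toReal / 4))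
    linarith
  rw [lintegral_eq_zero_iff (by fun_prop)] at hz
  filter_upwards [hz] with z hz
  simp only [Pi.zero_apply, ENNReal.ofReal_eq_zero, hφ] at hz
  have h0 : max 0 (max (l / 2 - z.1) (z.1 - (l / 2 + h))) = 0 := by
    exact pow_eq_zero_iff (two_ne_zero) |>.mp (le_antisymm hz (sq_nonneg _))
  have := max_eq_left_iff.mp h0
  have := max_le_iff.mp this
  constructor <;> linarith [this.1, this.2]

/-- Theorem 3.9: failure of CD(K,∞). With two squares A0, A1 on opposite sides of a thin
strip, no midpoint measure supported in X can satisfy the CD(K,∞) entropy bound. -/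
theorem fails_CD_K_infty
    (K h l : ℝ) (hh : 0 < h) (hl : 0 < l) (hhl : 2 * h < l)
    (X : Set (ℝ × ℝ)) (hXmeas : MeasurableSet X)
    (hA0 : Set.Icc (0:ℝ) h ×ˢ Set.Icc (0:ℝ) h ⊆ X)
    (hA1 : Set.Icc l (l + h) ×ˢ Set.Icc (0:ℝ) h ⊆ X)
    (hstrip : volume (X ∩ Set.Icc (l/2) (l/2 + h) ×ˢ (Set.univ : Set ℝ))
        < ENNReal.ofReal (Real.exp (K * l ^ 2 / 8) * h ^ 2))
    (μ0 μ1 : Measure (ℝ × ℝ))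
    (hμ0 : μ0 = (volume (Set.Icc (0:ℝ) h ×ˢ Set.Icc (0:ℝ) h))⁻¹
        • volume.restrict (Set.Icc (0:ℝ) h ×ˢ Set.Icc (0:ℝ) h))
    (hμ1 : μ1 = (volume (Set.Icc l (l + h) ×ˢ Set.Icc (0:ℝ) h))⁻¹
        • volume.restrict (Set.Icc l (l + h) ×ˢ Set.Icc (0:ℝ) h)) :
    W2 μ0 μ1 = ENNReal.ofReal l ∧
    ¬ ∃ μ : Measure (ℝ × ℝ), IsProbabilityMeasure μ ∧ μ Xᶜ = 0 ∧
        W2 μ0 μ = ENNReal.ofReal (l/2) ∧ W2 μ μ1 = ENNReal.ofReal (l/2) ∧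
        EntInf (volume.restrict X) μ ≤
          ((1/2 : ℝ) : EReal) * EntInf (volume.restrict X) μ0
            + ((1/2 : ℝ) : EReal) * EntInf (volume.restrict X) μ1
            - ((K / 8 * l ^ 2 : ℝ) : EReal) := by
  have hA0m : MeasurableSet (Set.Icc (0:ℝ) h ×ˢ Set.Icc (0:ℝ) h) := measurableSet_Icc.prod measurableSet_Icc
  have hA1m : MeasurableSet (Set.Icc l (l + h) ×ˢ Set.Icc (0:ℝ) h) := measurableSet_Icc.prod measurableSet_Icc
  have hv0 : volume (Set.Icc (0:ℝ) h ×ˢ Set.Icc (0:ℝ) h) = ENNReal.ofReal (h ^ 2) := by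
    rw [Measure.volume_eq_prod, Measure.prod_prod, Real.volume_Icc, ← ENNReal.ofReal_mul (by linarith)]
    congr 1; ring
  have hv1 : volume (Set.Icc l (l + h) ×ˢ Set.Icc (0:ℝ) h) = ENNReal.ofReal (h ^ 2) := by
    rw [Measure.volume_eq_prod, Measure.prod_prod, Real.volume_Icc, Real.volume_Icc,
      ← ENNReal.ofReal_mul (by linarith)]
    congr 1; ring
  have hh2 : 0 < h ^ 2 := by positivity
  have hne : ENNReal.ofReal (h ^ 2) ≠ 0 := by simpa using hh.ne'
  have hp0 : IsProbabilityMeasure μ0 := by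
    refine ⟨?_⟩
    rw [hμ0, Measure.smul_apply, Measure.restrict_apply_univ, hv0, smul_eq_mul,
      ENNReal.inv_mul_cancel hne ENNReal.ofReal_ne_top]
  set T : ℝ × ℝ → ℝ × ℝ := fun z => z + (l, 0) with hT
  have hTm : Measurable T := by fun_prop
  have hpre : T ⁻¹' (Set.Icc l (l + h) ×ˢ Set.Icc (0:ℝ) h) = Set.Icc (0:ℝ) h ×ˢ Set.Icc (0:ℝ) h := by
    ext ⟨x, y⟩
    simp only [hT, Set.mem_preimage, Set.mem_prod, Set.mem_Icc, Prod.mk_add_mk, add_zero]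
    constructor
    · rintro ⟨⟨_, _⟩, _, _⟩
      refine ⟨⟨?_, ?_⟩, ?_, ?_⟩ <;> linarith
    · rintro ⟨⟨_, _⟩, _, _⟩
      refine ⟨⟨?_, ?_⟩, ?_, ?_⟩ <;> linarith
  have hmap : μ0.map T = μ1 := by
    have hmp := (measurePreserving_add_right (volume : Measure (ℝ × ℝ)) (l, 0)).restrict_preimage hA1m
    have := hmp.map_eq
    change Measure.map T (volume.restrict (T ⁻¹' _)) = _ at this
    rw [hpre] at this
    rw [hμ0, hμ1, Measure.map_smul, this, hv0, hv1]
  have hs0 : ∀ᵐ z ∂μ0, z ∈ Set.Icc (0:ℝ) h ×ˢ Set.Icc (0:ℝ) h := by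
    rw [hμ0]
    exact Measure.ae_smul_measure (ae_restrict_mem hA0m) _
  have hs : ∀ᵐ z ∂μ0, z.1 ∈ Set.Icc 0 h := hs0.mono fun z hz => hz.1
  have hi0 : Integrable (fun z : ℝ × ℝ => z.1) μ0 := by
    refine Integrable.of_bound (by fun_prop) h ?_
    filter_upwards [hs] with z hz
    rw [Real.norm_eq_abs, abs_of_nonneg hz.1]
    exact hz.2
  have hi1 : Integrable (fun z : ℝ × ℝ => z.1) μ1 := by
    rw [← hmap, integrable_map_measure (by fun_prop) hTm.aemeasurable]
    exact hi0.add (integrable_const l)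
  have hmean : ∫ z, z.1 ∂μ1 - ∫ z, z.1 ∂μ0 = l := by
    rw [← hmap, integral_map hTm.aemeasurable (by fun_prop)]
    simp only [hT, Prod.fst_add]
    rw [integral_add hi0 (integrable_const l)]
    simp
  constructor
  · refine W2_eq_of _ _ _ hl.le ?_ ?_
    · have hpm : Measurable (fun z : ℝ × ℝ => (z, T z)) := measurable_id.prodMk hTm
      refine ⟨μ0.map (fun z => (z, T z)), ⟨Measure.isProbabilityMeasure_map hpm.aemeasurable, ?_, ?_⟩, ?_⟩
      · rw [Measure.map_map measurable_fst hpm]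
        exact Measure.map_id
      · rw [Measure.map_map measurable_snd hpm]
        exact hmap
      · unfold costSup
        rw [lintegral_map (by fun_prop) hpm]
        have : ∀ z, edist z (T z) ^ 2 = ENNReal.ofReal (l ^ 2) := by
          intro z
          rw [edist_dist, hT, dist_self_add_right, Prod.norm_def, ENNReal.ofReal_pow hl.le]
          simp [abs_of_pos hl, hl.le]
        simp [this]
    · intro γ hγ
      by_contra hlt
      push Not at hlt
      obtain ⟨hp, g0, g1⟩ := hγ
      have hfin : costSup γ ≠ ⊤ := ne_top_of_lt hlt
      obtain ⟨s0, b0⟩ := sq_cost γ (costSup γ).toReal ENNReal.toReal_nonneg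
        (ENNReal.ofReal_toReal hfin).ge
      obtain ⟨_, e0⟩ := sq_expand γ _ _ g0 g1 s0 hi0 hi1 l
      have hn : 0 ≤ ∫ p, (p.2.1 - p.1.1 - l) ^ 2 ∂γ := integral_nonneg fun p => sq_nonneg _
      have hlt' : (costSup γ).toReal < l ^ 2 := (ENNReal.lt_ofReal_iff_toReal_lt hfin).mp hlt
      rw [hmean] at e0
      nlinarith
  · rintro ⟨μ, hp, hX, hW0, hW1, hent⟩
    have hst := midpoint_strip h l hl μ0 μ1 μ hs hi0 hi1 hmean hW0 hW1
    have E0 : EntInf (volume.restrict X) μ0 = ((-Real.log (h ^ 2) : ℝ) : EReal) := by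
      rw [hμ0]; exact ent_square X _ hA0m hA0 _ hh2 hv0
    have E1 : EntInf (volume.restrict X) μ1 = ((-Real.log (h ^ 2) : ℝ) : EReal) := by
      rw [hμ1]; exact ent_square X _ hA1m hA1 _ hh2 hv1
    rw [E0, E1, ← EReal.coe_mul, ← EReal.coe_add, ← EReal.coe_sub] at hent
    by_cases hac : μ ≪ volume.restrict X
    · set S : Set (ℝ × ℝ) := X ∩ Set.Icc (l/2) (l/2 + h) ×ˢ (Set.univ : Set ℝ) with hS
      have hSm : MeasurableSet S := hXmeas.inter (measurableSet_Icc.prod MeasurableSet.univ)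
      have hμS : μ Sᶜ = 0 := by
        have hX' : ∀ᵐ z ∂μ, z ∈ X := hX
        have : ∀ᵐ z ∂μ, z ∈ S := by
          filter_upwards [hX', hst] with z h1 h2
          exact ⟨h1, h2, trivial⟩
        exact this
      have hfin : volume S ≠ ⊤ := ne_top_of_lt hstrip
      have hSX : (volume.restrict X) S = volume S := by
        rw [Measure.restrict_apply hSm, Set.inter_eq_left.mpr Set.inter_subset_left]
      have hS0 : volume S ≠ 0 := by
        intro h0
        have h1 : μ S = 0 := hac (hSX.trans h0)
        have h2 : μ Set.univ ≤ μ S + μ Sᶜ := by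
          rw [← Set.union_compl_self S]; exact measure_union_le _ _
        rw [h1, hμS, measure_univ] at h2
        simp at h2
      have hvpos := ENNReal.toReal_pos hS0 hfin
      have hlow := ent_lower (volume.restrict X) μ hac S hSm hμS (volume S).toReal hvpos
        (by rw [hSX, ENNReal.ofReal_toReal hfin])
      have hfinal := EReal.coe_le_coe_iff.mp (hlow.trans hent)
      have hvlt : (volume S).toReal < Real.exp (K * l ^ 2 / 8) * h ^ 2 :=
        (ENNReal.lt_ofReal_iff_toReal_lt hfin).mp hstrip
      have hlog := Real.log_lt_log hvpos hvlt
      rw [Real.log_mul (Real.exp_ne_zero _) hh2.ne', Real.log_exp] at hlog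
      linarith
    · unfold EntInf at hent
      rw [if_neg hac] at hent
      exact absurd hent (not_le.mpr (EReal.coe_lt_top _))

end
end

section
/- For all real numbers p, q ≥ 0 and λ > 0 one has (1/2)·(1 + p) · (1/4)·(1 + q + λ + q/λ) ≥ ((1 + (p·q)^{1/4})/2)^4. -/
open MeasureTheory ENNReal
open scoped Classical

noncomputable section

/-- The algebraic core of the Jacobian estimate in the proof of Proposition 3.7. -/
theorem jacobian_algebraic_inequality
    (p q lam : ℝ) (hp : 0 ≤ p) (hq : 0 ≤ q) (hlam : 0 < lam) :
    ((1 + (p * q) ^ ((1:ℝ)/4)) / 2) ^ 4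
      ≤ (1/2) * (1 + p) * ((1/4) * (1 + q + lam + q / lam)) := by
  obtain ⟨a, ha, rfl⟩ : ∃ a : ℝ, 0 ≤ a ∧ a ^ 4 = p :=
    ⟨p ^ ((1:ℝ)/4), Real.rpow_nonneg hp _, by
      rw [← Real.rpow_natCast, ← Real.rpow_mul hp]; norm_num⟩
  obtain ⟨b, hb, rfl⟩ : ∃ b : ℝ, 0 ≤ b ∧ b ^ 4 = q :=
    ⟨q ^ ((1:ℝ)/4), Real.rpow_nonneg hq _, by
      rw [← Real.rpow_natCast, ← Real.rpow_mul hq]; norm_num⟩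
  have hab : 0 ≤ a * b := mul_nonneg ha hb
  have hroot : (a ^ 4 * b ^ 4) ^ ((1:ℝ)/4) = a * b := by
    rw [← mul_pow, ← Real.rpow_natCast, ← Real.rpow_mul hab]; norm_num
  rw [hroot]
  have h1 : 2 * b ^ 2 ≤ lam + b ^ 4 / lam := by
    have h : lam + b ^ 4 / lam - 2 * b ^ 2 = (lam - b ^ 2) ^ 2 / lam := by
      field_simp
      ring
    have h' : 0 ≤ (lam - b ^ 2) ^ 2 / lam := by positivity
    linarith
  have h2 : (1 + a * b) ^ 2 ≤ (1 + a ^ 2) * (1 + b ^ 2) := by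
    nlinarith [sq_nonneg (a - b)]
  have h3 : ((1 + a * b) ^ 2) ^ 2 ≤ ((1 + a ^ 2) * (1 + b ^ 2)) ^ 2 :=
    pow_le_pow_left₀ (by positivity) h2 2
  have h4 : (1 + a ^ 2) ^ 2 ≤ 2 * (1 + a ^ 4) := by
    nlinarith [sq_nonneg (a ^ 2 - 1)]
  have h5 : (1 + a ^ 2) ^ 2 * (1 + b ^ 2) ^ 2 ≤ 2 * (1 + a ^ 4) * (1 + b ^ 2) ^ 2 :=
    mul_le_mul_of_nonneg_right h4 (by positivity)
  have h6 : (1 + a ^ 4) * (1 + b ^ 2) ^ 2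
      ≤ (1 + a ^ 4) * (1 + b ^ 4 + lam + b ^ 4 / lam) :=
    mul_le_mul_of_nonneg_left (by nlinarith) (by positivity)
  have h7 : ((1 + a * b) / 2) ^ 4 = ((1 + a * b) ^ 2) ^ 2 / 16 := by ring
  rw [h7]
  rw [mul_pow] at h3
  linarith

end
end
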